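/- arXiv:1010.0086 — 4 statements merged into one kernel-verified Lean document; each statement's English description precedes it below -/
import Mathlib

section
/- For every Lusztig datum a ∈ ℬ, the collection M(a) = (M_K(a))_{K∈M_n^×} is an e-BZ datum: it satisfies M_{[1,i]}(a) = 0 for all 1 ≤ i ≤ n, the inequalities (BZ-1)', and the 3-term relations (BZ-2)'. -/
/-- The set of Lusztig data: `a : Π → ℤ_{≥0}`, modeled as an integer-valued function on
`ℤ × ℤ` that is nonnegative everywhere and vanishes off `Π = {(k,l) : 1 ≤ k < l ≤ n+1}`. -/
def IsLusztig (n : ℕ) (a : ℤ → ℤ → ℤ) : Prop :=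
  (∀ k l : ℤ, 0 ≤ a k l) ∧ ∀ k l : ℤ, ¬(1 ≤ k ∧ k < l ∧ l ≤ (n : ℤ) + 1) → a k l = 0

/-- The `p`-th smallest element (1-indexed) `k_p` of a Maya diagram `K`. -/
def kth (K : Finset ℕ) (p : ℕ) : ℕ := (K.sort (· ≤ ·)).getD (p - 1) 0

/-- `C = (c_{p,q})_{1 ≤ p ≤ q ≤ l}` (with `l = |K|`) is a `K`-tableau: an upper-triangular
integer matrix with `c_{p,p} = k_p`, `c_{p,q} ≤ c_{p,q+1}` and `c_{p,q} < c_{p+1,q}`. -/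
def IsKTab (K : Finset ℕ) (c : ℕ → ℕ → ℤ) : Prop :=
  (∀ p : ℕ, 1 ≤ p → p ≤ K.card → c p p = (kth K p : ℤ)) ∧
  (∀ p q : ℕ, 1 ≤ p → p ≤ q → q + 1 ≤ K.card → c p q ≤ c p (q + 1)) ∧
  (∀ p q : ℕ, 1 ≤ p → p + 1 ≤ q → q ≤ K.card → c p q < c (p + 1) q)

/-- `Σ_{1 ≤ p < q ≤ l} a_{c_{p,q}, c_{p,q}+(q−p)}`. -/
def tabSum (a : ℤ → ℤ → ℤ) (K : Finset ℕ) (c : ℕ → ℕ → ℤ) : ℤ :=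
  ∑ p ∈ Finset.Icc 1 K.card, ∑ q ∈ Finset.Icc (p + 1) K.card,
    a (c p q) (c p q + ((q : ℤ) - (p : ℤ)))

/-- `M_K(a) = −Σ_{j=1}^{l} Σ_{i=1}^{k_j−1} a_{i,k_j} + min{ tabSum over K-tableaux }`,
for `K ∈ M_n^×`, with the conventions `M_∅(a) = M_{[1,n+1]}(a) = 0`. -/
noncomputable def MK (n : ℕ) (a : ℤ → ℤ → ℤ) (K : Finset ℕ) : ℤ :=
  if K = ∅ ∨ K = Finset.Icc 1 (n + 1) then 0
  else
    -(∑ k ∈ K, ∑ s ∈ Finset.Icc 1 (k - 1), a (s : ℤ) (k : ℤ)) +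
      sInf {z : ℤ | ∃ c : ℕ → ℕ → ℤ, IsKTab K c ∧ z = tabSum a K c}
/-- A BZ datum of type `A_n`: a collection of integers `M = (M_K)` indexed by Maya diagrams
`K ⊆ [1,n+1]` (modeled as a total function on `Finset ℕ`, with the conventions
`M_∅ = M_{[1,n+1]} = 0`), satisfying the inequalities (BZ-1)' and the 3-term relations
(BZ-2)'. -/
def IsBZ (n : ℕ) (M : Finset ℕ → ℤ) : Prop :=
  M ∅ = 0 ∧ M (Finset.Icc 1 (n + 1)) = 0 ∧
  (∀ i j : ℕ, ∀ K : Finset ℕ, 1 ≤ i → i ≤ n + 1 → 1 ≤ j → j ≤ n + 1 → i ≠ j →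
    K ⊆ Finset.Icc 1 (n + 1) → i ∉ K → j ∉ K →
    M (insert i K) + M (insert j K) ≤ M (insert i (insert j K)) + M K) ∧
  (∀ i j k : ℕ, ∀ K : Finset ℕ, 1 ≤ i → i < j → j < k → k ≤ n + 1 →
    K ⊆ Finset.Icc 1 (n + 1) → i ∉ K → j ∉ K → k ∉ K →
    M (insert i (insert k K)) + M (insert j K) =
      min (M (insert i (insert j K)) + M (insert k K))
        (M (insert j (insert k K)) + M (insert i K)))

/-- A `w₀`-BZ datum: a BZ datum with `M_{[n−i+2,n+1]} = 0` for all `1 ≤ i ≤ n`. -/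
def IsW0BZ (n : ℕ) (M : Finset ℕ → ℤ) : Prop :=
  IsBZ n M ∧ ∀ i : ℕ, 1 ≤ i → i ≤ n → M (Finset.Icc (n - i + 2) (n + 1)) = 0

/-- An `e`-BZ datum: a BZ datum with `M_{[1,i]} = 0` for all `1 ≤ i ≤ n`. -/
def IsEBZ (n : ℕ) (M : Finset ℕ → ℤ) : Prop :=
  IsBZ n M ∧ ∀ i : ℕ, 1 ≤ i → i ≤ n → M (Finset.Icc 1 i) = 0

open Polynomial

def Val (P : ℤ[X]) (m : ℕ) : Prop := ∃ Q : ℤ[X], P = X ^ m * Q ∧ 0 < Q.coeff 0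

theorem Val.mul {P Q : ℤ[X]} {m k : ℕ} (h : Val P m) (h' : Val Q k) : Val (P * Q) (m + k) := by
  obtain ⟨A, rfl, hA⟩ := h
  obtain ⟨B, rfl, hB⟩ := h'
  exact ⟨A * B, by ring, by rw [mul_coeff_zero]; positivity⟩

theorem Val.add {P Q : ℤ[X]} {m k : ℕ} (h : Val P m) (h' : Val Q k) : Val (P + Q) (min m k) := by
  obtain ⟨A, rfl, hA⟩ := h
  obtain ⟨B, rfl, hB⟩ := h'
  rcases lt_trichotomy m k with h | h | h
  · obtain ⟨d, rfl⟩ := Nat.exists_eq_add_of_lt h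
    refine ⟨A + X ^ (d + 1) * B, by rw [min_eq_left (by omega)]; ring, ?_⟩
    simpa [mul_coeff_zero, coeff_X_pow] using hA
  · subst h
    refine ⟨A + B, by rw [min_self]; ring, ?_⟩
    rw [coeff_add]; positivity
  · obtain ⟨d, rfl⟩ := Nat.exists_eq_add_of_lt h
    refine ⟨B + X ^ (d + 1) * A, by rw [min_eq_right (by omega)]; ring, ?_⟩
    simpa [mul_coeff_zero, coeff_X_pow] using hB

theorem Val.le_of_dvd {P : ℤ[X]} {m k : ℕ} (h : Val P m) (h' : X ^ k ∣ P) : k ≤ m := by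
  obtain ⟨A, rfl, hA⟩ := h
  by_contra hlt
  have := (X_pow_dvd_iff.1 h') m (by omega)
  rw [coeff_X_pow_mul'] at this
  simp at this
  omega

theorem Val.dvd {P : ℤ[X]} {m : ℕ} (h : Val P m) : X ^ m ∣ P := by
  obtain ⟨A, rfl, hA⟩ := h
  exact dvd_mul_right _ _

theorem Val.unique {P : ℤ[X]} {m k : ℕ} (h : Val P m) (h' : Val P k) : m = k :=
  le_antisymm (h'.le_of_dvd h.dvd) (h.le_of_dvd h'.dvd)

theorem Val.ne_zero {P : ℤ[X]} {m : ℕ} (h : Val P m) : P ≠ 0 := by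
  rintro rfl
  have := h.le_of_dvd (dvd_zero (X ^ (m + 1)))
  omega

theorem Val.X_pow (m : ℕ) : Val (X ^ m) m := ⟨1, by simp, by simp⟩

theorem Val.sum {ι : Type*} (s : Finset ι) (hs : s.Nonempty) (P : ι → ℤ[X]) (m : ι → ℕ)
    (h : ∀ i ∈ s, Val (P i) (m i)) :
    ∃ i ∈ s, Val (∑ j ∈ s, P j) (m i) ∧ ∀ j ∈ s, m i ≤ m j := by
  classical
  induction hs using Finset.Nonempty.cons_induction with
  | singleton a => exact ⟨a, by simp, by simpa using h, by simp⟩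
  | cons a s ha hs ih =>
    obtain ⟨i, hi, hv, hm⟩ := ih fun j hj => h j (by simp [hj])
    have h2 := (h a (by simp)).add hv
    rw [Finset.sum_cons]
    rcases le_total (m a) (m i) with h3 | h3
    · refine ⟨a, by simp, by rwa [min_eq_left h3] at h2, ?_⟩
      intro j hj
      rcases Finset.mem_cons.1 hj with rfl | hj
      · exact le_rfl
      · exact h3.trans (hm j hj)
    · refine ⟨i, by simp [hi], by rwa [min_eq_right h3] at h2, ?_⟩
      intro j hj
      rcases Finset.mem_cons.1 hj with rfl | hj
      · exact h3
      · exact hm j hj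

/-! determinants -/

def DD {R : Type*} [CommRing R] (B : ℕ → ℕ → R) {l : ℕ} (ρ f : Fin l → ℕ) : R :=
  Matrix.det (Matrix.of fun i j => B (ρ i) (f j))

theorem DD_block {F : Type*} [Field F] (B : ℕ → ℕ → F) {l : ℕ} (f : Fin l → ℕ)
    (h : DD B (fun i => (i : ℕ)) f ≠ 0) :
    ∃ S : ℕ → ℕ → F, ∀ (m : ℕ) (s x : Fin m → ℕ),
      DD B (Fin.append (fun i : Fin l => (i : ℕ)) s) (Fin.append f x) =
        DD B (fun i => (i : ℕ)) f * DD S s x := by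
  set A : Matrix (Fin l) (Fin l) F := Matrix.of fun i j => B (i : ℕ) (f j) with hA
  have hdet : IsUnit A.det := isUnit_iff_ne_zero.2 h
  let : Invertible A := Matrix.invertibleOfIsUnitDet A hdet
  refine ⟨fun r y => B r y - ∑ p, (∑ q, B r (f q) * (⅟A) q p) * B (p : ℕ) y, ?_⟩
  intro m s x
  have := Matrix.det_fromBlocks₁₁ A (Matrix.of fun i j => B (i : ℕ) (x j))
    (Matrix.of fun i j => B (s i) (f j)) (Matrix.of fun i j => B (s i) (x j))
  unfold DD
  rw [← Matrix.det_reindex_self finSumFinEquiv] at this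
  refine Eq.trans ?_ (this.trans ?_)
  · congr 1
    ext i j
    refine Fin.addCases (fun i => ?_) (fun i => ?_) i <;>
    refine Fin.addCases (fun j => ?_) (fun j => ?_) j <;> simp [hA]
  · congr 1

theorem DD_snoc_des {F : Type*} [Field F] (B : ℕ → ℕ → F) {l : ℕ} (f : Fin l → ℕ)
    (h : DD B (fun i => (i : ℕ)) f ≠ 0) (x y : ℕ) :
    DD B (fun i => (i : ℕ)) f *
      DD B (fun i : Fin (l + 2) => (i : ℕ)) (Fin.snoc (α := fun _ => ℕ) (Fin.snoc (α := fun _ => ℕ) f x) y) =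
    DD B (fun i : Fin (l + 1) => (i : ℕ)) (Fin.snoc (α := fun _ => ℕ) f x) *
      DD B (Fin.snoc (α := fun _ => ℕ) (fun i : Fin l => (i : ℕ)) (l + 1)) (Fin.snoc (α := fun _ => ℕ) f y) -
    DD B (fun i : Fin (l + 1) => (i : ℕ)) (Fin.snoc (α := fun _ => ℕ) f y) *
      DD B (Fin.snoc (α := fun _ => ℕ) (fun i : Fin l => (i : ℕ)) (l + 1)) (Fin.snoc (α := fun _ => ℕ) f x) := by
  obtain ⟨S, hS⟩ := DD_block B f h
  have h1 : ∀ r y, DD B (Fin.snoc (α := fun _ => ℕ) (fun i : Fin l => (i : ℕ)) r) (Fin.snoc (α := fun _ => ℕ) f y) =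
      DD B (fun i => (i : ℕ)) f * S r y := by
    intro r y
    have := hS 1 ![r] ![y]
    rw [Fin.append_right_eq_snoc, Fin.append_right_eq_snoc] at this
    simpa [DD] using this
  have e1 : (fun i : Fin (l + 1) => (i : ℕ)) = (Fin.snoc (α := fun _ => ℕ) (fun i : Fin l => (i : ℕ)) l) := by
    ext i
    refine Fin.lastCases ?_ (fun i => ?_) i <;> simp
  have e2 : ∀ {α : Type} (g : Fin l → α) (x y : α), (Fin.snoc (α := fun _ => α) (Fin.snoc (α := fun _ => α) g x) y) = Fin.append g ![x, y] := by
    intro α g x y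
    ext i
    refine Fin.addCases (m := l) (n := 2) (fun i => ?_) (fun i => ?_) i
    · rw [Fin.append_left]
      have : (Fin.castAdd 2 i : Fin (l+2)) = i.castSucc.castSucc := rfl
      rw [this, Fin.snoc_castSucc, Fin.snoc_castSucc]
    · rw [Fin.append_right]
      fin_cases i
      · have : (Fin.natAdd l (0 : Fin 2) : Fin (l+2)) = (Fin.last l).castSucc := rfl
        simp [this, -Fin.castSucc_natAdd]
      · have : (Fin.natAdd l (1 : Fin 2) : Fin (l+2)) = (Fin.last (l+1)) := rfl
        simp [this]
  have e3 : (fun i : Fin (l + 2) => (i : ℕ)) = (Fin.snoc (α := fun _ => ℕ) (Fin.snoc (α := fun _ => ℕ) (fun i : Fin l => (i : ℕ)) l) (l+1)) := by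
    rw [← e1]
    ext i
    refine Fin.lastCases ?_ (fun i => ?_) i <;> simp
  rw [e3, e2, e2, e1, h1, h1, h1, h1, hS]
  have : DD S ![l, l+1] ![x, y] = S l x * S (l+1) y - S l y * S (l+1) x := by
    simp [DD, Matrix.det_fin_two]
  rw [this]
  ring

theorem DD_map {R S : Type*} [CommRing R] [CommRing S] (φ : R →+* S) (B : ℕ → ℕ → R) {l : ℕ}
    (ρ f : Fin l → ℕ) : φ (DD B ρ f) = DD (fun i j => φ (B i j)) ρ f := by
  unfold DD
  rw [RingHom.map_det]
  rfl

theorem DD_snoc_des' {R : Type*} [CommRing R] [IsDomain R] (B : ℕ → ℕ → R) {l : ℕ} (f : Fin l → ℕ)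
    (h : DD B (fun i => (i : ℕ)) f ≠ 0) (x y : ℕ) :
    DD B (fun i => (i : ℕ)) f *
      DD B (fun i : Fin (l + 2) => (i : ℕ)) (Fin.snoc (α := fun _ => ℕ) (Fin.snoc (α := fun _ => ℕ) f x) y) =
    DD B (fun i : Fin (l + 1) => (i : ℕ)) (Fin.snoc (α := fun _ => ℕ) f x) *
      DD B (Fin.snoc (α := fun _ => ℕ) (fun i : Fin l => (i : ℕ)) (l + 1)) (Fin.snoc (α := fun _ => ℕ) f y) -
    DD B (fun i : Fin (l + 1) => (i : ℕ)) (Fin.snoc (α := fun _ => ℕ) f y) *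
      DD B (Fin.snoc (α := fun _ => ℕ) (fun i : Fin l => (i : ℕ)) (l + 1)) (Fin.snoc (α := fun _ => ℕ) f x) := by
  apply IsFractionRing.injective R (FractionRing R)
  have := DD_snoc_des (fun i j => algebraMap R (FractionRing R) (B i j)) f ?_ x y
  · simpa only [map_mul, map_sub, DD_map] using this
  · rw [← DD_map]
    simpa using h

theorem DD_insertNth {R : Type*} [CommRing R] (B : ℕ → ℕ → R) {l : ℕ} (ρ : Fin (l + 1) → ℕ)
    (f : Fin l → ℕ) (x : ℕ) (p : Fin (l + 1)) :
    DD B ρ (Fin.insertNth (α := fun _ => ℕ) p x f) =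
      (-1) ^ ((p : ℕ) + l) * DD B ρ (Fin.snoc (α := fun _ => ℕ) f x) := by
  have key : ∀ p : Fin (l + 1), DD B ρ (Fin.insertNth (α := fun _ => ℕ) p x f) = (-1) ^ (p : ℕ) *
      ∑ i : Fin (l + 1), (-1) ^ (i : ℕ) * B (ρ i) x * DD B (ρ ∘ i.succAbove) f := by
    intro p
    unfold DD
    rw [Matrix.det_succ_column _ p, Finset.mul_sum]
    refine Finset.sum_congr rfl fun i _ => ?_
    simp only [Matrix.of_apply, Fin.insertNth_apply_same]
    have : (Matrix.of fun i j => B (ρ i) ((Fin.insertNth (α := fun _ => ℕ) p x f) j)).submatrix i.succAbove p.succAbove =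
      Matrix.of fun k j => B ((ρ ∘ i.succAbove) k) (f j) := by
      ext k j; simp
    erw [this]
    ring
  rw [← Fin.insertNth_last', key, key, Fin.val_last, ← mul_assoc, ← pow_add,
    show (p : ℕ) + l + l = p + 2 * l by ring, pow_add _ _ (2 * l), pow_mul]
  simp

theorem exists_pos {l : ℕ} (f : Fin l → ℕ) (hf : StrictMono f) (x : ℕ) :
    ∃ p : Fin (l + 1), ∀ i, f i < x ↔ (i : ℕ) < p := by
  classical
  set S := Finset.univ.filter fun i => f i < x with hS
  have hc : S.card ≤ l := (Finset.card_le_univ S).trans (by simp)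
  refine ⟨⟨S.card, by omega⟩, fun i => ?_⟩
  constructor
  · intro h
    have : Finset.Iic i ⊆ S := by
      intro j hj
      simp only [hS, Finset.mem_filter, Finset.mem_univ, true_and]
      exact (hf.monotone (Finset.mem_Iic.1 hj)).trans_lt h
    have := Finset.card_le_card this
    simp at this
    simp only
    omega
  · intro h
    by_contra hn
    have : S ⊆ Finset.Iio i := by
      intro j hj
      simp only [hS, Finset.mem_filter, Finset.mem_univ, true_and] at hj
      rw [Finset.mem_Iio]
      by_contra hji
      have := hf.monotone (not_lt.1 hji)
      omega
    have := Finset.card_le_card this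
    simp at this
    simp only at h
    omega

theorem succAbove_val {l : ℕ} (q : Fin (l + 1)) (i : Fin l) :
    ((q.succAbove i : Fin (l + 1)) : ℕ) = if (i : ℕ) < q then (i : ℕ) else i + 1 := by
  simp only [Fin.succAbove, Fin.lt_def, Fin.val_castSucc]
  split_ifs <;> simp

theorem strictMono_ins {l : ℕ} (f : Fin l → ℕ) (hf : StrictMono f) (x : ℕ) (hx : ∀ i, f i ≠ x)
    (p : Fin (l + 1)) (hp : ∀ i, f i < x ↔ (i : ℕ) < p) :
    StrictMono (Fin.insertNth (α := fun _ => ℕ) p x f) := by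
  intro j k hjk
  induction j using Fin.succAboveCases p with
  | x =>
    induction k using Fin.succAboveCases p with
    | x => simp at hjk
    | p k =>
      simp only [Fin.insertNth_apply_same, Fin.insertNth_apply_succAbove]
      have := hp k
      have := hx k
      rw [Fin.lt_def, succAbove_val] at hjk
      split_ifs at hjk <;> omega
  | p j =>
    induction k using Fin.succAboveCases p with
    | x =>
      simp only [Fin.insertNth_apply_same, Fin.insertNth_apply_succAbove]
      rw [hp]
      rw [Fin.lt_def, succAbove_val] at hjk
      split_ifs at hjk <;> omega
    | p k =>
      simp only [Fin.insertNth_apply_succAbove]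
      exact hf ((Fin.strictMono_succAbove p).lt_iff_lt.1 hjk)

theorem pos_ins {l : ℕ} (f : Fin l → ℕ) (x y : ℕ) (hxy : x < y)
    (p q : Fin (l + 1)) (hp : ∀ i, f i < x ↔ (i : ℕ) < p) (hq : ∀ i, f i < y ↔ (i : ℕ) < q) :
    ∀ j, Fin.insertNth (α := fun _ => ℕ) q y f j < x ↔ (j : ℕ) < p.castSucc := by
  have hpq : (p : ℕ) ≤ q := by
    by_contra h
    have h1 := hp ⟨q, by omega⟩
    have h2 := hq ⟨q, by omega⟩
    simp only at h1 h2
    omega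
  intro j
  induction j using Fin.succAboveCases q with
  | x => simp; omega
  | p j =>
    rw [Fin.insertNth_apply_succAbove, hp, succAbove_val, Fin.val_castSucc]
    split_ifs <;> omega

theorem snoc_ins {l : ℕ} (f : Fin l → ℕ) (x y : ℕ) (q : Fin (l + 1)) :
    Fin.snoc (α := fun _ => ℕ) (Fin.insertNth (α := fun _ => ℕ) q y f) x =
      Fin.insertNth (α := fun _ => ℕ) q.castSucc y (Fin.snoc (α := fun _ => ℕ) f x) := by
  symm
  rw [Fin.insertNth_eq_iff]
  refine ⟨by simp, ?_⟩
  ext j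
  induction j using Fin.lastCases with
  | last => 
    have : q.castSucc.succAbove (Fin.last l) = Fin.last (l + 1) := by
      ext; rw [succAbove_val]; simp; omega
    simp [Fin.removeNth, this]
  | cast j =>
    have : q.castSucc.succAbove j.castSucc = (q.succAbove j).castSucc := by
      ext; rw [succAbove_val]; simp [succAbove_val]
    rw [Fin.removeNth, this]; simp

def rowsN (l : ℕ) : Fin l → ℕ := fun i => i
def skipN (l : ℕ) : Fin l → ℕ := fun i => if (i : ℕ) + 1 < l then i else i + 1

theorem skipN_succ (l : ℕ) :
    skipN (l + 1) = Fin.snoc (α := fun _ => ℕ) (fun i : Fin l => (i : ℕ)) (l + 1) := by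
  ext i
  refine Fin.lastCases ?_ (fun i => ?_) i <;> simp [skipN]

def DK {R : Type*} [CommRing R] (B : ℕ → ℕ → R) (K : Finset ℕ) : R :=
  DD B (rowsN K.card) (K.orderEmbOfFin rfl)
def GK {R : Type*} [CommRing R] (B : ℕ → ℕ → R) (K : Finset ℕ) : R :=
  DD B (skipN K.card) (K.orderEmbOfFin rfl)

theorem DK_eq {R : Type*} [CommRing R] (B : ℕ → ℕ → R) (K : Finset ℕ) {l : ℕ} (h : K.card = l)
    (f : Fin l → ℕ) (hf : StrictMono f) (hm : ∀ i, f i ∈ K) :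
    DK B K = DD B (rowsN l) f ∧ GK B K = DD B (skipN l) f := by
  subst h
  rw [Finset.orderEmbOfFin_unique rfl hm hf]
  exact ⟨rfl, rfl⟩

theorem DK_des {R : Type*} [CommRing R] [IsDomain R] (B : ℕ → ℕ → R) (K : Finset ℕ)
    (h : DK B K ≠ 0) (x y : ℕ) (hx : x ∉ K) (hy : y ∉ K) (hxy : x < y) :
    DK B K * DK B (insert x (insert y K)) =
      DK B (insert x K) * GK B (insert y K) - DK B (insert y K) * GK B (insert x K) := by
  obtain ⟨l, hl⟩ : ∃ l, K.card = l := ⟨_, rfl⟩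
  obtain ⟨f, hf, hfK⟩ : ∃ f : Fin l → ℕ, StrictMono f ∧ ∀ i, f i ∈ K :=
    ⟨K.orderEmbOfFin hl, (K.orderEmbOfFin hl).strictMono, fun i => K.orderEmbOfFin_mem hl i⟩
  have hK : DK B K = DD B (fun i => (i : ℕ)) f := (DK_eq B K hl f hf hfK).1
  obtain ⟨p, hp⟩ := exists_pos f hf x
  obtain ⟨q, hq⟩ := exists_pos f hf y
  have hxf : ∀ i, f i ≠ x := fun i e => hx (e ▸ hfK i)
  have hyf : ∀ i, f i ≠ y := fun i e => hy (e ▸ hfK i)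
  have one : ∀ (z : ℕ) (r : Fin (l + 1)), z ∉ K → (∀ i, f i ≠ z) → (∀ i, f i < z ↔ (i : ℕ) < r) →
      DK B (insert z K) = (-1) ^ ((r : ℕ) + l) * DD B (rowsN (l + 1)) (Fin.snoc (α := fun _ => ℕ) f z) ∧
      GK B (insert z K) = (-1) ^ ((r : ℕ) + l) * DD B (skipN (l + 1)) (Fin.snoc (α := fun _ => ℕ) f z) := by
    intro z r hz hzf hr
    obtain ⟨h1, h2⟩ := DK_eq B (insert z K) (l := l + 1) (by rw [Finset.card_insert_of_notMem hz, hl])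
      (Fin.insertNth (α := fun _ => ℕ) r z f) (strictMono_ins f hf z hzf r hr) (by
        intro j
        induction j using Fin.succAboveCases r with
        | x => simp
        | p j => simp [hfK])
    rw [h1, h2, DD_insertNth, DD_insertNth]
    exact ⟨rfl, rfl⟩
  obtain ⟨hx1, hx2⟩ := one x p hx hxf hp
  obtain ⟨hy1, hy2⟩ := one y q hy hyf hq
  have two : DK B (insert x (insert y K)) = (-1) ^ ((p : ℕ) + q) *
      DD B (rowsN (l + 2)) (Fin.snoc (α := fun _ => ℕ) (Fin.snoc (α := fun _ => ℕ) f x) y) := by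
    have hxy' : x ∉ insert y K := by simp [hx]; omega
    obtain ⟨h1, -⟩ := DK_eq B (insert x (insert y K)) (l := l + 2)
      (by rw [Finset.card_insert_of_notMem hxy', Finset.card_insert_of_notMem hy, hl])
      (Fin.insertNth (α := fun _ => ℕ) p.castSucc x (Fin.insertNth (α := fun _ => ℕ) q y f))
      (strictMono_ins _ (strictMono_ins f hf y hyf q hq) x (by
        intro j
        induction j using Fin.succAboveCases q with
        | x => simp; omega
        | p j => simp [hxf]) _ (pos_ins f x y hxy p q hp hq)) (by
        intro j
        induction j using Fin.succAboveCases p.castSucc with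
        | x => simp
        | p j => 
          rw [Fin.insertNth_apply_succAbove]
          induction j using Fin.succAboveCases q with
          | x => simp
          | p j => simp [hfK])
    rw [h1, DD_insertNth, snoc_ins, DD_insertNth, ← mul_assoc, ← pow_add]
    congr 1
    simp only [Fin.val_castSucc]
    rw [show (p : ℕ) + (l + 1) + (q + (l + 1)) = p + q + 2 * (l + 1) by ring, pow_add, pow_mul]
    simp
  have main := DD_snoc_des' B f (hK ▸ h) x y
  rw [← skipN_succ] at main
  rw [two, hx1, hx2, hy1, hy2, hK]
  have e : ((-1 : R) ^ ((p : ℕ) + l)) * (-1) ^ ((q : ℕ) + l) = (-1) ^ ((p : ℕ) + q) := by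
    rw [← pow_add, show (p : ℕ) + l + (q + l) = p + q + 2 * l by ring, pow_add _ _ (2 * l), pow_mul]
    simp
  rw [← e]
  unfold rowsN
  linear_combination ((-1 : R) ^ ((p : ℕ) + l)) * (-1) ^ ((q : ℕ) + l) * main

/-! the matrix -/

def shiftA (a : ℤ → ℤ → ℤ) : ℤ → ℤ → ℤ := fun x y => a x (y + 1)

noncomputable def AA : (ℤ → ℤ → ℤ) → ℕ → ℕ → ℤ[X]
  | _, 0, _ => 1
  | a, r + 1, y => ∑ x ∈ Finset.range y, X ^ (a (x : ℤ) ((x : ℤ) + 1)).toNat * AA (shiftA a) r x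
termination_by _ r _ => r

theorem AA_diff (a : ℤ → ℤ → ℤ) (r y z : ℕ) (h : y ≤ z) :
    AA a (r + 1) z = (∑ x ∈ Finset.Ico y z, X ^ (a (x : ℤ) ((x : ℤ) + 1)).toNat * AA (shiftA a) r x)
      + AA a (r + 1) y := by
  rw [AA, AA, add_comm, Finset.sum_range_add_sum_Ico _ h]

def inter {l : ℕ} (f : Fin (l + 1) → ℕ) : Finset (Fin l → ℕ) :=
  Fintype.piFinset fun p : Fin l => Finset.Ico (f p.castSucc) (f p.succ)

noncomputable def wt (a : ℤ → ℤ → ℤ) {l : ℕ} (g : Fin l → ℕ) : ℕ :=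
  ∑ p, (a (g p : ℤ) ((g p : ℤ) + 1)).toNat

theorem DD_rec (a : ℤ → ℤ → ℤ) {l : ℕ} (ρ : Fin l → ℕ) (f : Fin (l + 1) → ℕ) (hf : StrictMono f) :
    DD (AA a) (Fin.cons (α := fun _ => ℕ) 0 (fun i => ρ i + 1)) f =
      ∑ g ∈ inter f, X ^ wt a g * DD (AA (shiftA a)) ρ g := by
  set A : Matrix (Fin (l + 1)) (Fin (l + 1)) ℤ[X] :=
    Matrix.of fun i j => AA a (Fin.cons (α := fun _ => ℕ) 0 (fun i => ρ i + 1) i) (f j) with hA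
  set B : Matrix (Fin (l + 1)) (Fin (l + 1)) ℤ[X] :=
    Matrix.of fun i j => Fin.cases (motive := fun _ => ℤ[X]) (A i 0) (fun j => A i j.succ - A i j.castSucc) j with hB
  have h1 : A.det = B.det := by
    apply Matrix.det_eq_of_forall_col_eq_smul_add_pred (fun _ => 1)
    · intro i; simp [hB]
    · intro i j; simp [hB]
  have h2 : B.det = Matrix.det (Matrix.of fun i j : Fin l => ∑ x ∈ Finset.Ico (f j.castSucc) (f j.succ),
      X ^ (a (x : ℤ) ((x : ℤ) + 1)).toNat * AA (shiftA a) (ρ i) x) := by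
    rw [Matrix.det_succ_row_zero, Fin.sum_univ_succ, Finset.sum_eq_zero, add_zero]
    · have : B 0 0 = 1 := by simp [hB, hA, AA]
      rw [this]
      simp only [Fin.val_zero, pow_zero, one_mul]
      congr 1
      ext1 i j
      simp only [hB, hA, Matrix.submatrix_apply, Matrix.of_apply, Fin.succAbove_zero, Fin.cases_succ, Fin.cons_succ]
      rw [AA_diff a (ρ i) (f j.castSucc) (f j.succ) (hf.monotone j.castSucc_lt_succ.le)]
      ring
    · intro j _
      have : B 0 j.succ = 0 := by simp [hB, hA, AA]
      rw [this]; simp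
  have h3 := (Matrix.detRowAlternating (R := ℤ[X]) (n := Fin l)).toMultilinearMap.map_sum_finset
    (fun (j : Fin l) (x : ℕ) => fun i => X ^ (a (x : ℤ) ((x : ℤ) + 1)).toNat * AA (shiftA a) (ρ i) x)
    (fun j : Fin l => Finset.Ico (f j.castSucc) (f j.succ))
  change A.det = _
  rw [h1, h2, ← Matrix.det_transpose]
  refine Eq.trans ?_ (h3.trans ?_)
  · change Matrix.det _ = Matrix.det _
    congr 1
    ext1 i j
    simp
  · refine Finset.sum_congr rfl fun g _ => ?_
    have := Matrix.det_mul_column (fun i => X ^ (a (g i : ℤ) ((g i : ℤ) + 1)).toNat)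
      (Matrix.of fun i j => AA (shiftA a) (ρ j) (g i))
    rw [Finset.prod_pow_eq_pow_sum] at this
    refine Eq.trans this ?_
    congr 1
    unfold DD
    rw [← Matrix.det_transpose]
    rfl

def IsTab {l : ℕ} (f : Fin l → ℕ) (c : ℕ → ℕ → ℤ) : Prop :=
  (∀ p : Fin l, c (p + 1) (p + 1) = (f p : ℤ)) ∧
  (∀ p q : ℕ, 1 ≤ p → p ≤ q → q + 1 ≤ l → c p q ≤ c p (q + 1)) ∧
  (∀ p q : ℕ, 1 ≤ p → p + 1 ≤ q → q ≤ l → c p q < c (p + 1) q)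

def tsum' (a : ℤ → ℤ → ℤ) (l : ℕ) (c : ℕ → ℕ → ℤ) : ℤ :=
  ∑ p ∈ Finset.Icc 1 l, ∑ q ∈ Finset.Icc (p + 1) l,
    a (c p q) (c p q + ((q : ℤ) - (p : ℤ)))

theorem tsum_rec (a : ℤ → ℤ → ℤ) (l : ℕ) (c c' : ℕ → ℕ → ℤ)
    (h : ∀ p q, 1 ≤ p → p ≤ q → q ≤ l → c' p q = c p (q + 1)) :
    tsum' a (l + 1) c = (∑ p ∈ Finset.Icc 1 l, a (c' p p) (c' p p + 1)) + tsum' (shiftA a) l c' := by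
  unfold tsum'
  rw [Finset.sum_Icc_succ_top (by omega), Finset.Icc_eq_empty (a := l + 1 + 1) (by omega),
    Finset.sum_empty, add_zero, ← Finset.sum_add_distrib]
  refine Finset.sum_congr rfl fun p hp => ?_
  rw [Finset.mem_Icc] at hp
  rw [← Finset.add_sum_Ioc_eq_sum_Icc (by omega : p + 1 ≤ l + 1), ← Finset.Icc_add_one_left_eq_Ioc,
    ← Finset.image_add_right_Icc (p + 1) l 1, Finset.sum_image (by intro _ _ _ _ h; simpa using h)]
  congr 1
  · rw [h p p hp.1 le_rfl hp.2]
    push_cast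
    congr 1; ring
  · refine Finset.sum_congr rfl fun q hq => ?_
    rw [Finset.mem_Icc] at hq
    rw [h p q hp.1 (by omega) hq.2, shiftA]
    push_cast
    congr 1; ring

theorem wt_eq (a : ℤ → ℤ → ℤ) (ha : ∀ k l, 0 ≤ a k l) {l : ℕ} (g : Fin l → ℕ) (c : ℕ → ℕ → ℤ)
    (h : ∀ p : Fin l, c (p + 1) (p + 1) = (g p : ℤ)) :
    ∑ p ∈ Finset.Icc 1 l, a (c p p) (c p p + 1) = (wt a g : ℤ) := by
  unfold wt
  push_cast
  rw [← Finset.Ico_add_one_right_eq_Icc, Finset.sum_Ico_eq_sum_range, Finset.sum_range]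
  refine Finset.sum_congr rfl fun p _ => ?_
  rw [add_comm 1, h]
  simp [ha]

theorem inter_mono {l : ℕ} (f : Fin (l + 1) → ℕ) (hf : StrictMono f) (g : Fin l → ℕ) (hg : g ∈ inter f) :
    StrictMono g := by
  intro p q hpq
  simp only [inter, Fintype.mem_piFinset, Finset.mem_Ico] at hg
  refine (hg p).2.trans_le (le_trans (hf.monotone ?_) (hg q).1)
  rw [Fin.le_def]
  simp
  omega

theorem main_ind (l : ℕ) : ∀ (a : ℤ → ℤ → ℤ) (_ : ∀ k l, 0 ≤ a k l) (f : Fin l → ℕ) (_ : StrictMono f),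
    ∃ m : ℕ, Val (DD (AA a) (rowsN l) f) m ∧ X ^ m ∣ DD (AA a) (skipN l) f ∧
      (∃ c, IsTab f c ∧ tsum' a l c = m) ∧ ∀ c, IsTab f c → (m : ℤ) ≤ tsum' a l c := by
  induction l with
  | zero =>
    intro a ha f hf
    refine ⟨0, by simpa [DD] using Val.X_pow 0, by simp, ⟨fun _ _ => 0, ⟨fun p => p.elim0, by omega, by omega⟩, by simp [tsum']⟩, by simp [tsum']⟩
  | succ l ih =>
    intro a ha f hf
    have ih' : ∀ g : Fin l → ℕ, ∃ m : ℕ, StrictMono g → Val (DD (AA (shiftA a)) (rowsN l) g) m ∧ X ^ m ∣ DD (AA (shiftA a)) (skipN l) g ∧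
      (∃ c, IsTab g c ∧ tsum' (shiftA a) l c = m) ∧ ∀ c, IsTab g c → (m : ℤ) ≤ tsum' (shiftA a) l c := by
      intro g
      by_cases hg : StrictMono g
      · obtain ⟨m, hm⟩ := ih (shiftA a) (fun _ _ => ha _ _) g hg
        exact ⟨m, fun _ => hm⟩
      · exact ⟨0, fun h => absurd h hg⟩
    choose mu hmu using ih'
    have hne : (inter f).Nonempty := by
      refine ⟨fun p => f p.castSucc, ?_⟩
      simp only [inter, Fintype.mem_piFinset, Finset.mem_Ico]
      exact fun p => ⟨le_rfl, hf p.castSucc_lt_succ⟩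
    have hrows : rowsN (l + 1) = Fin.cons (α := fun _ => ℕ) 0 (fun i => rowsN l i + 1) := by
      ext i
      refine Fin.cases ?_ (fun i => ?_) i <;> simp [rowsN]
    obtain ⟨g, hg, hv, hmin⟩ := Val.sum (inter f) hne (fun g => X ^ wt a g * DD (AA (shiftA a)) (rowsN l) g)
      (fun g => wt a g + mu g) (fun g hg => (Val.X_pow _).mul (hmu g (inter_mono f hf g hg)).1)
    rw [← DD_rec a (rowsN l) f hf, ← hrows] at hv
    refine ⟨wt a g + mu g, hv, ?_, ?_, ?_⟩
    · rcases Nat.eq_zero_or_pos l with rfl | hl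
      · have : DD (AA a) (rowsN 1) f = 1 := by simp [DD, rowsN, AA]
        have hv : Val (DD (AA a) (rowsN 1) f) _ := hv
        rw [this] at hv
        rw [hv.unique (by simpa using Val.X_pow 0)]
        simp
      · have hsk : skipN (l + 1) = Fin.cons (α := fun _ => ℕ) 0 (fun i => skipN l i + 1) := by
          ext i
          refine Fin.cases ?_ (fun i => ?_) i
          · simp [skipN, hl]
          · simp [skipN]; split_ifs <;> omega
        rw [hsk, DD_rec a _ f hf]
        refine Finset.dvd_sum fun g' hg' => ?_
        refine (pow_dvd_pow X (hmin g' hg')).trans ?_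
        rw [pow_add]
        exact mul_dvd_mul_left _ (hmu g' (inter_mono f hf g' hg')).2.1
    · obtain ⟨c', hc', hs⟩ := (hmu g (inter_mono f hf g hg)).2.2.1
      simp only [inter, Fintype.mem_piFinset, Finset.mem_Ico] at hg
      refine ⟨fun p q => if h : q = p ∧ p - 1 < l + 1 then (f ⟨p - 1, h.2⟩ : ℤ) else c' p (q - 1), ⟨?_, ?_, ?_⟩, ?_⟩
      · intro p
        beta_reduce
        rw [dif_pos ⟨rfl, by omega⟩]
        rfl
      · intro p q h1 h2 h3
        beta_reduce
        rcases h2.eq_or_lt with rfl | h2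
        · rw [dif_pos ⟨rfl, by omega⟩, dif_neg (by omega), Nat.add_sub_cancel]
          obtain ⟨p, rfl⟩ := Nat.exists_eq_add_of_le' h1
          have e := hc'.1 ⟨p, by omega⟩
          simp only at e
          rw [e]
          exact_mod_cast (hg ⟨p, by omega⟩).1
        · rw [dif_neg (by omega), dif_neg (by omega)]
          have := hc'.2.1 p (q - 1) h1 (by omega) (by omega)
          rwa [show q - 1 + 1 = q + 1 - 1 by omega] at this
      · intro p q h1 h2 h3
        beta_reduce
        rcases h2.eq_or_lt with rfl | h2
        · rw [dif_neg (by omega), dif_pos ⟨rfl, by omega⟩]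
          simp only [Nat.add_sub_cancel]
          obtain ⟨p, rfl⟩ := Nat.exists_eq_add_of_le' h1
          have e := hc'.1 ⟨p, by omega⟩
          simp only at e
          rw [e]
          exact_mod_cast (hg ⟨p, by omega⟩).2
        · rw [dif_neg (by omega), dif_neg (by omega)]
          exact hc'.2.2 p (q - 1) h1 (by omega) (by omega)
      · rw [tsum_rec a l _ c', hs, wt_eq a ha g c' hc'.1]
        · push_cast; rfl
        · intro p q h1 h2 h3
          rw [dif_neg (by omega), Nat.add_sub_cancel]
    · intro c hc
      obtain ⟨hc1, hc2, hc3⟩ := hc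
      have hlow : ∀ p : Fin l, (f p.castSucc : ℤ) ≤ c (p + 1) (p + 2) := by
        intro p
        have := hc2 (p + 1) (p + 1) (by omega) le_rfl (by omega)
        rw [← hc1 p.castSucc]
        exact this
      have hup : ∀ p : Fin l, c (p + 1) (p + 2) < (f p.succ : ℤ) := by
        intro p
        have := hc3 (p + 1) (p + 2) (by omega) le_rfl (by omega)
        rw [← hc1 p.succ]
        exact this
      set g' : Fin l → ℕ := fun p => (c (p + 1) (p + 2)).toNat with hg'
      have hgc : ∀ p : Fin l, c (p + 1) (p + 2) = (g' p : ℤ) := by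
        intro p
        have := hlow p
        simp only [hg']
        omega
      have hg'm : g' ∈ inter f := by
        simp only [inter, Fintype.mem_piFinset, Finset.mem_Ico]
        intro p
        have h1 := hlow p
        have h2 := hup p
        rw [hgc] at h1 h2
        exact_mod_cast And.intro h1 h2
      have htab : IsTab g' (fun p q => c p (q + 1)) := by
        refine ⟨hgc, ?_, ?_⟩
        · intro p q h1 h2 h3
          exact hc2 p (q + 1) h1 (by omega) (by omega)
        · intro p q h1 h2 h3
          exact hc3 p (q + 1) h1 (by omega) (by omega)
      have h1 := (hmu g' (inter_mono f hf g' hg'm)).2.2.2 _ htab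
      rw [tsum_rec a l c (fun p q => c p (q + 1)) (fun _ _ _ _ _ => rfl), wt_eq a ha g' (fun p q => c p (q + 1)) hgc]
      have h2 := hmin g' hg'm
      push_cast
      zify at h2
      linarith

theorem isKTab_iff (K : Finset ℕ) (c : ℕ → ℕ → ℤ) : IsKTab K c ↔ IsTab (K.orderEmbOfFin rfl) c := by
  have hk : ∀ p : Fin K.card, kth K (p + 1) = K.orderEmbOfFin rfl p := by
    intro p
    rw [Finset.orderEmbOfFin_apply]
    unfold kth
    rw [Nat.add_sub_cancel, List.getD_eq_getElem _ _ (by simp)]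
    rfl
  unfold IsKTab IsTab
  refine and_congr ?_ Iff.rfl
  constructor
  · intro h p
    rw [h (p + 1) (by omega) (by omega), hk]
  · intro h p h1 h2
    obtain ⟨p, rfl⟩ := Nat.exists_eq_add_of_le' h1
    have := h ⟨p, by omega⟩
    simp only at this
    rw [this, ← hk]

theorem exists_mu (a : ℤ → ℤ → ℤ) (ha : ∀ k l, 0 ≤ a k l) (K : Finset ℕ) :
    ∃ m : ℕ, Val (DK (AA a) K) m ∧ X ^ m ∣ GK (AA a) K ∧
      IsLeast {z : ℤ | ∃ c : ℕ → ℕ → ℤ, IsKTab K c ∧ z = tabSum a K c} m := by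
  obtain ⟨m, h1, h2, ⟨c, hc, hs⟩, h3⟩ := main_ind K.card a ha _ (K.orderEmbOfFin rfl).strictMono
  refine ⟨m, h1, h2, ⟨c, (isKTab_iff K c).2 hc, hs.symm⟩, ?_⟩
  rintro z ⟨c, hc, rfl⟩
  exact h3 c ((isKTab_iff K c).1 hc)

theorem kth_Icc (m p : ℕ) (h1 : 1 ≤ p) (h2 : p ≤ m) : kth (Finset.Icc 1 m) p = p := by
  have hu : (fun i : Fin m => (i : ℕ) + 1) = (Finset.Icc 1 m).orderEmbOfFin (by simp) :=
    Finset.orderEmbOfFin_unique _ (by intro x; simp) (by intro x y h; simpa using h)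
  have := congrFun hu ⟨p - 1, by omega⟩
  rw [Finset.orderEmbOfFin_apply] at this
  unfold kth
  rw [List.getD_eq_getElem _ _ (by simp; omega)]
  simp only [Fin.getElem_fin] at this
  rw [← this]
  omega

theorem tab_Icc (a : ℤ → ℤ → ℤ) (m : ℕ) (c : ℕ → ℕ → ℤ) (hc : IsKTab (Finset.Icc 1 m) c) :
    tabSum a (Finset.Icc 1 m) c =
      ∑ k ∈ Finset.Icc 1 m, ∑ s ∈ Finset.Icc 1 (k - 1), a (s : ℤ) (k : ℤ) := by
  obtain ⟨h1, h2, h3⟩ := hc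
  simp only [Nat.card_Icc, Nat.add_sub_cancel] at h1 h2 h3
  have hd : ∀ p, 1 ≤ p → p ≤ m → c p p = p := fun p a b => by rw [h1 p a b, kth_Icc m p a b]
  have low : ∀ d p, 1 ≤ p → p + d ≤ m → (p : ℤ) ≤ c p (p + d) := by
    intro d
    induction d with
    | zero => intro p hp hm; exact (hd p hp hm).ge
    | succ d ih =>
      intro p hp hm
      exact (ih p hp (by omega)).trans (h2 p (p + d) hp (by omega) (by omega))
  have up : ∀ d p, 1 ≤ p → p + d ≤ m → c p (p + d) ≤ p := by
    intro d
    induction d with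
    | zero => intro p hp hm; exact (hd p hp hm).le
    | succ d ih =>
      intro p hp hm
      have e1 := ih (p + 1) (by omega) (by omega)
      have e2 := h3 p (p + (d + 1)) hp (by omega) (by omega)
      rw [show p + 1 + d = p + (d + 1) by ring] at e1
      push_cast at e1
      omega
  have hc : ∀ p q, 1 ≤ p → p ≤ q → q ≤ m → c p q = p := by
    intro p q hp hpq hq
    obtain ⟨d, rfl⟩ := Nat.exists_eq_add_of_le hpq
    exact le_antisymm (up d p hp hq) (low d p hp hq)
  unfold tabSum
  simp only [Nat.card_Icc, Nat.add_sub_cancel]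
  rw [Finset.sum_comm' (s' := fun q => Finset.Icc 1 (q - 1)) (t' := Finset.Icc 1 m)]
  · refine Finset.sum_congr rfl fun q hq => Finset.sum_congr rfl fun p hp => ?_
    rw [Finset.mem_Icc] at hp hq
    rw [hc p q hp.1 (by omega) hq.2]
    congr 1; ring
  · intro x y
    simp only [Finset.mem_Icc]
    omega

/-- Berenstein–Fomin–Zelevinsky: for every Lusztig datum `a`, the collection
`M(a) = (M_K(a))_{K ∈ M_n^×}` is an `e`-BZ datum: it satisfies `M_{[1,i]}(a) = 0` for all
`1 ≤ i ≤ n`, the inequalities (BZ-1)', and the 3-term relations (BZ-2)'. -/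
theorem stmt9 (n : ℕ) (hn : 1 ≤ n) (a : ℤ → ℤ → ℤ) (ha : IsLusztig n a) :
    IsEBZ n (MK n a) := by
  choose mu hV hG hL using exists_mu a ha.1
  have hfull : ∀ m, (mu (Finset.Icc 1 m) : ℤ) =
      ∑ k ∈ Finset.Icc 1 m, ∑ s ∈ Finset.Icc 1 (k - 1), a (s : ℤ) (k : ℤ) := by
    intro m
    obtain ⟨c, hc, e⟩ := (hL (Finset.Icc 1 m)).1
    rw [e, tab_Icc a m c hc]
  have hMK : ∀ K, MK n a K =
      -(∑ k ∈ K, ∑ s ∈ Finset.Icc 1 (k - 1), a (s : ℤ) (k : ℤ)) + mu K := by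
    intro K
    unfold MK
    split_ifs with h
    · rcases h with rfl | rfl
      · have := hfull 0
        simp at this
        simp [this]
      · rw [hfull]; ring
    · rw [(hL K).csInf_eq]
  have bz1 : ∀ (i j : ℕ) (K : Finset ℕ), i < j → i ∉ K → j ∉ K →
      mu (insert i K) + mu (insert j K) ≤ mu (insert i (insert j K)) + mu K := by
    intro i j K hij hi hj
    have h := DK_des (AA a) K (hV K).ne_zero i j hi hj hij
    have h2 := (hV K).mul (hV (insert i (insert j K)))
    rw [h] at h2
    rw [add_comm (mu (insert i (insert j K)))]
    apply h2.le_of_dvd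
    apply dvd_sub
    · rw [pow_add]; exact mul_dvd_mul (hV _).dvd (hG _)
    · rw [add_comm, pow_add]; exact mul_dvd_mul (hV _).dvd (hG _)
  refine ⟨⟨by simp [MK], by simp [MK], ?_, ?_⟩, ?_⟩
  · intro i j K _ _ _ _ hij _ hi hj
    have key : mu (insert i K) + mu (insert j K) ≤ mu (insert i (insert j K)) + mu K := by
      rcases lt_or_gt_of_ne hij with h | h
      · exact bz1 i j K h hi hj
      · rw [Finset.insert_comm, add_comm (mu (insert i K))]
        exact bz1 j i K h hj hi
    simp only [hMK]
    have hij' : i ∉ insert j K := by simp [hi, hij]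
    rw [Finset.sum_insert hij', Finset.sum_insert hi, Finset.sum_insert hj]
    zify at key
    linarith
  · intro i j k K _ hij hjk _ _ hi hj hk
    have key : mu (insert i (insert k K)) + mu (insert j K) =
        min (mu (insert i (insert j K)) + mu (insert k K))
          (mu (insert j (insert k K)) + mu (insert i K)) := by
      have hne := (hV K).ne_zero
      have h1 := DK_des (AA a) K hne i j hi hj hij
      have h2 := DK_des (AA a) K hne j k hj hk hjk
      have h3 := DK_des (AA a) K hne i k hi hk (hij.trans hjk)
      have h4 : DK (AA a) (insert i (insert k K)) * DK (AA a) (insert j K) =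
          DK (AA a) (insert i (insert j K)) * DK (AA a) (insert k K) +
          DK (AA a) (insert j (insert k K)) * DK (AA a) (insert i K) := by
        apply mul_left_cancel₀ hne
        linear_combination DK (AA a) (insert j K) * h3 - DK (AA a) (insert k K) * h1 -
          DK (AA a) (insert i K) * h2
      refine ((hV _).mul (hV _)).unique (P := DK (AA a) (insert i (insert k K)) * DK (AA a) (insert j K)) ?_
      rw [h4]
      exact ((hV _).mul (hV _)).add ((hV _).mul (hV _))
    simp only [hMK]
    have hij' : i ∉ insert j K := by simp [hi]; omega
    have hjk' : j ∉ insert k K := by simp [hj]; omega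
    have hik' : i ∉ insert k K := by simp [hi]; omega
    rw [Finset.sum_insert hij', Finset.sum_insert hjk', Finset.sum_insert hik',
      Finset.sum_insert hi, Finset.sum_insert hj, Finset.sum_insert hk]
    zify at key
    rcases min_cases ((mu (insert i (insert j K)) : ℤ) + mu (insert k K))
          ((mu (insert j (insert k K)) : ℤ) + mu (insert i K)) with h | h
    · rw [min_eq_left] <;> linarith
    · rw [min_eq_right] <;> linarith
  · intro i _ _
    rw [hMK, hfull]; ring
end

section
/- For every Lusztig datum a ∈ ℬ and every 1 ≤ i ≤ n, M_{[i+1,n+1]}(a) = −Σ_{t=i+1}^{n+1} Σ_{s=1}^{i} a_{s,t} = −m_i(a). (In particular, the weight of the collection M(a), namely the tuple (M_{[i+1,n+1]}(a))_{i}, coincides with wt(a) = (−m_i(a))_{i}.) -/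
theorem kth_Icc_s11 (i m p : ℕ) (hp : 1 ≤ p) (hp2 : i + p ≤ m) :
    kth (Finset.Icc (i + 1) m) p = i + p := by
  have h : (Finset.Icc (i + 1) m).sort (· ≤ ·) = List.range' (i + 1) (m - i) := by
    have h1 : Finset.Icc (i + 1) m = (List.range' (i + 1) (m - i)).toFinset := by
      ext x
      simp only [Finset.mem_Icc, List.mem_toFinset, List.mem_range'_1]
      omega
    rw [h1]
    exact (List.toFinset_sort (· ≤ ·) List.nodup_range').2 (List.pairwise_le_range' (step := 1))
  unfold kth
  rw [h, List.getD_eq_getElem _ _ (by simp; omega)]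
  simp
  omega

theorem tab_unique (i m : ℕ) (c : ℕ → ℕ → ℤ) (hc : IsKTab (Finset.Icc (i + 1) m) c)
    (p q : ℕ) (hp : 1 ≤ p) (hpq : p ≤ q) (hq : i + q ≤ m) : c p q = (i : ℤ) + p := by
  obtain ⟨h1, h2, h3⟩ := hc
  simp only [Nat.card_Icc] at h1 h2 h3
  have lo : ∀ d p : ℕ, 1 ≤ p → i + (p + d) ≤ m → (i : ℤ) + p ≤ c p (p + d) := by
    intro d
    induction d with
    | zero =>
      intro p hp h
      rw [Nat.add_zero, h1 p hp (by omega), kth_Icc_s11 i m p hp (by omega)]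
      push_cast; omega
    | succ d ih =>
      intro p hp h
      have := ih p hp (by omega)
      have := h2 p (p + d) hp (by omega) (by omega)
      rw [← Nat.add_assoc]; omega
  have hi : ∀ d p : ℕ, 1 ≤ p → i + (p + d) ≤ m → c p (p + d) ≤ (i : ℤ) + p := by
    intro d
    induction d with
    | zero =>
      intro p hp h
      rw [Nat.add_zero, h1 p hp (by omega), kth_Icc_s11 i m p hp (by omega)]
      push_cast; omega
    | succ d ih =>
      intro p hp h
      have e := ih (p + 1) (by omega) (by omega)
      have e2 := h3 p (p + (d + 1)) hp (by omega) (by omega)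
      rw [show p + 1 + d = p + (d + 1) by omega] at e
      push_cast at e
      omega
  obtain ⟨d, rfl⟩ := Nat.exists_eq_add_of_le hpq
  exact le_antisymm (hi d p hp hq) (lo d p hp hq)

theorem tab_exists (i m : ℕ) :
    IsKTab (Finset.Icc (i + 1) m) (fun p _ => (i : ℤ) + p) := by
  refine ⟨fun p hp h => ?_, fun p q _ _ _ => le_refl _, fun p q _ _ _ => ?_⟩
  · rw [Nat.card_Icc] at h
    rw [kth_Icc_s11 i m p hp (by omega)]; push_cast; rfl
  · push_cast; omega

theorem tabSum_eq (a : ℤ → ℤ → ℤ) (i m : ℕ) (c : ℕ → ℕ → ℤ)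
    (hc : IsKTab (Finset.Icc (i + 1) m) c) :
    tabSum a (Finset.Icc (i + 1) m) c =
      ∑ k ∈ Finset.Icc (i + 1) m, ∑ s ∈ Finset.Icc (i + 1) (k - 1), a (s : ℤ) (k : ℤ) := by
  unfold tabSum
  rw [Finset.sum_sigma', Finset.sum_sigma', Nat.card_Icc]
  refine Finset.sum_bij' (fun x _ => ⟨i + x.2, i + x.1⟩) (fun x _ => ⟨x.2 - i, x.1 - i⟩)
    ?_ ?_ ?_ ?_ ?_
  · rintro ⟨p, q⟩ h
    simp only [Finset.mem_sigma, Finset.mem_Icc] at h ⊢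
    omega
  · rintro ⟨p, q⟩ h
    simp only [Finset.mem_sigma, Finset.mem_Icc] at h ⊢
    omega
  · rintro ⟨p, q⟩ h
    simp
  · rintro ⟨p, q⟩ h
    simp only [Finset.mem_sigma, Finset.mem_Icc] at h
    have e1 : i + (p - i) = p := by omega
    have e2 : i + (q - i) = q := by omega
    simp only [e1, e2]
  · rintro ⟨p, q⟩ h
    simp only [Finset.mem_sigma, Finset.mem_Icc] at h ⊢
    rw [tab_unique i m c hc p q (by omega) (by omega) (by omega)]
    push_cast
    congr 1
    ring

theorem stmt11 (n : ℕ) (hn : 1 ≤ n) (a : ℤ → ℤ → ℤ) (ha : IsLusztig n a)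
    (i : ℕ) (hi1 : 1 ≤ i) (hi2 : i ≤ n) :
    MK n a (Finset.Icc (i + 1) (n + 1)) =
      -(∑ t ∈ Finset.Icc (i + 1) (n + 1), ∑ s ∈ Finset.Icc 1 i, a (s : ℤ) (t : ℤ)) ∧
    MK n a (Finset.Icc (i + 1) (n + 1)) =
      -(∑ k ∈ Finset.Icc 1 i, ∑ l ∈ Finset.Icc (i + 1) (n + 1), a (k : ℤ) (l : ℤ)) := by
  have key : MK n a (Finset.Icc (i + 1) (n + 1)) =
      -(∑ t ∈ Finset.Icc (i + 1) (n + 1), ∑ s ∈ Finset.Icc 1 i, a (s : ℤ) (t : ℤ)) := by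
    unfold MK
    rw [if_neg]
    · have hs : {z : ℤ | ∃ c : ℕ → ℕ → ℤ, IsKTab (Finset.Icc (i + 1) (n + 1)) c ∧
          z = tabSum a (Finset.Icc (i + 1) (n + 1)) c} =
          {∑ k ∈ Finset.Icc (i + 1) (n + 1), ∑ s ∈ Finset.Icc (i + 1) (k - 1),
            a (s : ℤ) (k : ℤ)} := by
        ext z
        simp only [Set.mem_setOf_eq, Set.mem_singleton_iff]
        constructor
        · rintro ⟨c, hc, rfl⟩
          exact tabSum_eq a i (n + 1) c hc
        · rintro rfl
          exact ⟨_, tab_exists i (n + 1), (tabSum_eq a i (n + 1) _ (tab_exists i (n + 1))).symm⟩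
      rw [hs, csInf_singleton]
      have hsplit : ∑ k ∈ Finset.Icc (i + 1) (n + 1), ∑ s ∈ Finset.Icc 1 (k - 1),
            a (s : ℤ) (k : ℤ) =
          ∑ t ∈ Finset.Icc (i + 1) (n + 1), ∑ s ∈ Finset.Icc 1 i, a (s : ℤ) (t : ℤ) +
          ∑ k ∈ Finset.Icc (i + 1) (n + 1), ∑ s ∈ Finset.Icc (i + 1) (k - 1),
            a (s : ℤ) (k : ℤ) := by
        rw [← Finset.sum_add_distrib]
        refine Finset.sum_congr rfl fun k hk => ?_
        rw [Finset.mem_Icc] at hk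
        rw [← Finset.sum_union]
        · congr 1
          ext x
          simp only [Finset.mem_Icc, Finset.mem_union]
          omega
        · rw [Finset.disjoint_left]
          intro x
          simp only [Finset.mem_Icc]
          omega
      rw [hsplit]
      ring
    · rintro (h | h)
      · have : n + 1 ∈ Finset.Icc (i + 1) (n + 1) := by rw [Finset.mem_Icc]; omega
        rw [h] at this
        simp at this
      · have : 1 ∈ Finset.Icc (i + 1) (n + 1) := by rw [h, Finset.mem_Icc]; omega
        rw [Finset.mem_Icc] at this
        omega
  refine ⟨key, ?_⟩
  rw [key, Finset.sum_comm]
end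

section
/- For every Lusztig datum a ∈ ℬ and every 1 ≤ i ≤ n, taking K = {i} ∪ [i+2,n+1] one has M_K(a) = −Σ_{s=1}^{i−1} a_{s,i} − Σ_{t=i+2}^{n+1} Σ_{s=1}^{i+1} a_{s,t} + min_{1 ≤ r ≤ n+1−i} { Σ_{q=i+1}^{i+r−1} a_{i,q} + Σ_{q=i+r+1}^{n+1} a_{i+1,q} }. -/
lemma aux_card (n i : ℕ) (hi2 : i ≤ n) :
    (insert i (Finset.Icc (i + 2) (n + 1))).card = n + 1 - i := by
  rw [Finset.card_insert_of_notMem (by simp)]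
  simp only [Nat.card_Icc]
  omega

lemma aux_kth (n i : ℕ) (hi2 : i ≤ n) (p : ℕ) (hp1 : 1 ≤ p) (hp : p ≤ n + 1 - i) :
    kth (insert i (Finset.Icc (i + 2) (n + 1))) p = if p = 1 then i else i + p := by
  have hc := aux_card n i hi2
  have h := Finset.orderEmbOfFin_unique hc
    (f := fun x : Fin (n + 1 - i) => if x.val = 0 then i else i + x.val + 1)
    (by
      intro x
      have := x.isLt
      simp only [Finset.mem_insert, Finset.mem_Icc]
      split_ifs <;> omega)
    (by
      intro x y hxy
      have hxy' : x.val < y.val := hxy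
      dsimp only
      split_ifs <;> omega)
  have h2 := congrFun h ⟨p - 1, by omega⟩
  rw [Finset.orderEmbOfFin_apply] at h2
  unfold kth
  rw [List.getD_eq_getElem _ _ (by rw [Finset.length_sort]; omega)]
  refine h2.symm.trans ?_
  dsimp only
  split_ifs <;> omega

lemma aux_row (n i : ℕ) (hi2 : i ≤ n) (c : ℕ → ℕ → ℤ)
    (hc : IsKTab (insert i (Finset.Icc (i + 2) (n + 1))) c) :
    (∀ p q, 2 ≤ p → p ≤ q → q ≤ n + 1 - i → c p q = i + p) ∧
    ∃ r, 1 ≤ r ∧ r ≤ n + 1 - i ∧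
      ∀ q, 1 ≤ q → q ≤ n + 1 - i → c 1 q = if q ≤ r then (i : ℤ) else i + 1 := by
  obtain ⟨h1, h2, h3⟩ := hc
  rw [aux_card n i hi2] at h1 h2 h3
  have hd1 : 1 ≤ n + 1 - i → c 1 1 = i := fun h => by
    rw [h1 1 le_rfl h, aux_kth n i hi2 1 le_rfl h]; simp
  have hd : ∀ p, 2 ≤ p → p ≤ n + 1 - i → c p p = i + p := fun p hp hp' => by
    rw [h1 p (by omega) hp', aux_kth n i hi2 p (by omega) hp', if_neg (by omega)]; simp
  have hlow : ∀ p d, 1 ≤ p → p + d ≤ n + 1 - i → c p p ≤ c p (p + d) := by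
    intro p d hp
    induction d with
    | zero => intro _; exact le_rfl
    | succ d ih =>
      intro h
      exact (ih (by omega)).trans (h2 p (p + d) hp (by omega) (by omega))
  have hup : ∀ d p, 1 ≤ p → 2 ≤ p + d → p + d ≤ n + 1 - i → c p (p + d) ≤ i + p := by
    intro d
    induction d with
    | zero => intro p hp h h'; exact (hd p h h').le
    | succ d ih =>
      intro p hp h h'
      have e1 := h3 p (p + (d + 1)) hp (by omega) h'
      have e2 := ih (p + 1) (by omega) (by omega) (by omega)
      rw [show p + 1 + d = p + (d + 1) by ring] at e2
      push_cast at e2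
      omega
  refine ⟨?_, ?_⟩
  · intro p q hp hpq hq
    obtain ⟨d, rfl⟩ := Nat.exists_eq_add_of_le hpq
    have e1 := hlow p d (by omega) hq
    have e2 := hup d p (by omega) (by omega) hq
    rw [hd p hp (by omega)] at e1
    omega
  · have key : ∀ m, 1 ≤ m → m ≤ n + 1 - i → ∃ r, 1 ≤ r ∧ r ≤ m ∧
        ∀ q, 1 ≤ q → q ≤ m → c 1 q = if q ≤ r then (i : ℤ) else i + 1 := by
      intro m hm
      induction m, hm using Nat.le_induction with
      | base =>
        intro h
        refine ⟨1, le_rfl, le_rfl, fun q hq hq' => ?_⟩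
        obtain rfl : q = 1 := by omega
        simpa using hd1 h
      | succ m hm ih =>
        intro h
        obtain ⟨r, hr1, hr2, hr⟩ := ih (by omega)
        have e0 := hr m hm le_rfl
        have e1 := h2 1 m le_rfl hm h
        have e2 := hup m 1 le_rfl (by omega) (by omega)
        rw [show 1 + m = m + 1 by ring] at e2
        push_cast at e2
        by_cases hcm : c 1 (m + 1) = i
        · have hrm : r = m := by
            by_contra hne
            rw [if_neg (by omega)] at e0
            omega
          subst hrm
          refine ⟨r + 1, by omega, le_rfl, fun q hq hq' => ?_⟩
          rw [if_pos hq']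
          rcases Nat.lt_or_ge r q with hlt | hle
          · obtain rfl : q = r + 1 := by omega
            exact hcm
          · rw [hr q hq hle, if_pos hle]
        · refine ⟨r, hr1, by omega, fun q hq hq' => ?_⟩
          rcases Nat.lt_or_ge m q with hlt | hle
          · obtain rfl : q = m + 1 := by omega
            rw [if_neg (by omega)]
            split_ifs at e0 <;> omega
          · exact hr q hq hle
    exact key _ (by omega) le_rfl

def cTab (i r : ℕ) (p q : ℕ) : ℤ :=
  if p = 1 then (if q ≤ r then (i : ℤ) else i + 1) else i + p

lemma aux_cTab (n i r : ℕ) (hi2 : i ≤ n) (hr : 1 ≤ r) :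
    IsKTab (insert i (Finset.Icc (i + 2) (n + 1))) (cTab i r) := by
  unfold IsKTab
  rw [aux_card n i hi2]
  refine ⟨?_, ?_, ?_⟩
  · intro p hp hp'
    rw [aux_kth n i hi2 p hp hp']
    unfold cTab
    split_ifs <;> omega
  · intro p q hp hpq hq
    unfold cTab
    split_ifs <;> omega
  · intro p q hp hpq hq
    unfold cTab
    split_ifs <;> push_cast <;> omega

def Trest (a : ℤ → ℤ → ℤ) (n i : ℕ) : ℤ :=
  ∑ p ∈ Finset.Icc 2 (n + 1 - i), ∑ q ∈ Finset.Icc (p + 1) (n + 1 - i), a (i + p) (i + q)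

def Frow (a : ℤ → ℤ → ℤ) (n i r : ℕ) : ℤ :=
  (∑ q ∈ Finset.Icc (i + 1) (i + r - 1), a (i : ℤ) (q : ℤ)) +
              ∑ q ∈ Finset.Icc (i + r + 1) (n + 1), a ((i : ℤ) + 1) (q : ℤ)

lemma aux_tabSum (n i r : ℕ) (hi2 : i ≤ n) (hr : 1 ≤ r) (hr' : r ≤ n + 1 - i)
    (a : ℤ → ℤ → ℤ) (c : ℕ → ℕ → ℤ)
    (h1 : ∀ p q, 2 ≤ p → p ≤ q → q ≤ n + 1 - i → c p q = i + p)
    (h2 : ∀ q, 1 ≤ q → q ≤ n + 1 - i → c 1 q = if q ≤ r then (i : ℤ) else i + 1) :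
    tabSum a (insert i (Finset.Icc (i + 2) (n + 1))) c = Trest a n i + Frow a n i r := by
  unfold tabSum
  rw [aux_card n i hi2]
  have hI : Finset.Icc 1 (n + 1 - i) = insert 1 (Finset.Icc 2 (n + 1 - i)) := by
    ext x; simp only [Finset.mem_insert, Finset.mem_Icc]; omega
  rw [hI, Finset.sum_insert (by simp), add_comm]
  congr 1
  · unfold Trest
    refine Finset.sum_congr rfl fun p hp => Finset.sum_congr rfl fun q hq => ?_
    simp only [Finset.mem_Icc] at hp hq
    rw [h1 p q (by omega) (by omega) (by omega)]
    congr 1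
    ring
  · have hJ : Finset.Icc (1 + 1) (n + 1 - i)
        = Finset.Icc 2 r ∪ Finset.Icc (r + 1) (n + 1 - i) := by
      ext x; simp only [Finset.mem_union, Finset.mem_Icc]; omega
    have hdis : Disjoint (Finset.Icc 2 r) (Finset.Icc (r + 1) (n + 1 - i)) := by
      rw [Finset.disjoint_left]; intro x; simp only [Finset.mem_Icc]; omega
    rw [hJ, Finset.sum_union hdis]
    unfold Frow
    congr 1
    · refine Finset.sum_bij (fun q _ => i + q - 1) ?_ ?_ ?_ ?_
      · intro q hq; simp only [Finset.mem_Icc] at hq ⊢; omega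
      · intro q hq q' hq' h; simp only [Finset.mem_Icc] at hq hq'; omega
      · intro b hb; simp only [Finset.mem_Icc] at hb
        exact ⟨b + 1 - i, by simp only [Finset.mem_Icc]; omega, by omega⟩
      · intro q hq; simp only [Finset.mem_Icc] at hq
        rw [h2 q (by omega) (by omega), if_pos (by omega)]
        congr 1
        omega
    · refine Finset.sum_bij (fun q _ => i + q) ?_ ?_ ?_ ?_
      · intro q hq; simp only [Finset.mem_Icc] at hq ⊢; omega
      · intro q hq q' hq' h; omega
      · intro b hb; simp only [Finset.mem_Icc] at hb
        exact ⟨b - i, by simp only [Finset.mem_Icc]; omega, by omega⟩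
      · intro q hq; simp only [Finset.mem_Icc] at hq
        rw [h2 q (by omega) (by omega), if_neg (by omega)]
        congr 1
        omega

lemma aux_Trest (n i : ℕ) (a : ℤ → ℤ → ℤ) :
    (∑ t ∈ Finset.Icc (i + 2) (n + 1), ∑ s ∈ Finset.Icc 1 (t - 1), a (s : ℤ) (t : ℤ)) =
    (∑ t ∈ Finset.Icc (i + 2) (n + 1), ∑ s ∈ Finset.Icc 1 (i + 1), a (s : ℤ) (t : ℤ))
      + Trest a n i := by
  have hT : Trest a n i =
      ∑ t ∈ Finset.Icc (i + 2) (n + 1), ∑ s ∈ Finset.Icc (i + 2) (t - 1), a (s : ℤ) (t : ℤ) := by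
    unfold Trest
    rw [Finset.sum_sigma', Finset.sum_sigma']
    refine Finset.sum_bij (fun x _ => ⟨i + x.2, i + x.1⟩) ?_ ?_ ?_ ?_
    · rintro ⟨p, q⟩ h; simp only [Finset.mem_sigma, Finset.mem_Icc] at h ⊢; omega
    · rintro ⟨p, q⟩ h ⟨p', q'⟩ h' e
      simp only [Sigma.mk.injEq, heq_eq_eq, add_right_inj] at e ⊢
      exact ⟨e.2, e.1⟩
    · rintro ⟨t, s⟩ h
      simp only [Finset.mem_sigma, Finset.mem_Icc] at h
      refine ⟨⟨s - i, t - i⟩, ?_, ?_⟩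
      · simp only [Finset.mem_sigma, Finset.mem_Icc]; omega
      · simp only [Sigma.mk.injEq, heq_eq_eq]; omega
    · rintro ⟨p, q⟩ h; simp
  rw [hT, ← Finset.sum_add_distrib]
  refine Finset.sum_congr rfl fun t ht => ?_
  simp only [Finset.mem_Icc] at ht
  rw [← Finset.sum_union]
  · refine Finset.sum_congr ?_ fun _ _ => rfl
    ext x; simp only [Finset.mem_union, Finset.mem_Icc]; omega
  · rw [Finset.disjoint_left]; intro x; simp only [Finset.mem_Icc]; omega

/-- for every Lusztig datum `a` and `1 ≤ i ≤ n`, for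
`K = {i} ∪ [i+2,n+1]` one has
`M_K(a) = −Σ_{s=1}^{i−1} a_{s,i} − Σ_{t=i+2}^{n+1} Σ_{s=1}^{i+1} a_{s,t}
  + min_{1 ≤ r ≤ n+1−i} { Σ_{q=i+1}^{i+r−1} a_{i,q} + Σ_{q=i+r+1}^{n+1} a_{i+1,q} }`. -/
theorem stmt12 (n : ℕ) (hn : 1 ≤ n) (a : ℤ → ℤ → ℤ) (ha : IsLusztig n a)
    (i : ℕ) (hi1 : 1 ≤ i) (hi2 : i ≤ n) :
    MK n a (insert i (Finset.Icc (i + 2) (n + 1))) =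
      -(∑ s ∈ Finset.Icc 1 (i - 1), a (s : ℤ) (i : ℤ)) -
        (∑ t ∈ Finset.Icc (i + 2) (n + 1), ∑ s ∈ Finset.Icc 1 (i + 1), a (s : ℤ) (t : ℤ)) +
        (((Finset.Icc 1 (n + 1 - i)).image fun r =>
            (∑ q ∈ Finset.Icc (i + 1) (i + r - 1), a (i : ℤ) (q : ℤ)) +
              ∑ q ∈ Finset.Icc (i + r + 1) (n + 1), a ((i : ℤ) + 1) (q : ℤ)).min).untopD 0 := by
  obtain ⟨r0, hr0, hmin⟩ := Finset.exists_min_image (Finset.Icc 1 (n + 1 - i)) (Frow a n i)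
    ⟨1, by simp only [Finset.mem_Icc]; omega⟩
  have hM : (((Finset.Icc 1 (n + 1 - i)).image fun r =>
            (∑ q ∈ Finset.Icc (i + 1) (i + r - 1), a (i : ℤ) (q : ℤ)) +
              ∑ q ∈ Finset.Icc (i + r + 1) (n + 1), a ((i : ℤ) + 1) (q : ℤ)).min).untopD 0
      = Frow a n i r0 := by
    change (((Finset.Icc 1 (n + 1 - i)).image (Frow a n i)).min).untopD 0 = _
    have : ((Finset.Icc 1 (n + 1 - i)).image (Frow a n i)).min = ((Frow a n i r0 : ℤ) : WithTop ℤ) := by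
      apply le_antisymm
      · exact Finset.min_le (Finset.mem_image_of_mem _ hr0)
      · refine Finset.le_min fun x hx => ?_
        obtain ⟨r, hr, rfl⟩ := Finset.mem_image.1 hx
        exact WithTop.coe_le_coe.2 (hmin r hr)
    rw [this]; rfl
  rw [hM]
  have hS : sInf {z : ℤ | ∃ c : ℕ → ℕ → ℤ,
      IsKTab (insert i (Finset.Icc (i + 2) (n + 1))) c ∧
        z = tabSum a (insert i (Finset.Icc (i + 2) (n + 1))) c} = Trest a n i + Frow a n i r0 := by
    apply IsLeast.csInf_eq
    constructor
    · simp only [Finset.mem_Icc] at hr0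
      refine ⟨cTab i r0, aux_cTab n i r0 hi2 hr0.1, (aux_tabSum n i r0 hi2 hr0.1 hr0.2 a _ ?_ ?_).symm⟩
      · intro p q hp _ _
        unfold cTab
        rw [if_neg (by omega)]
      · intro q _ _
        simp [cTab]
    · rintro z ⟨c, hc, rfl⟩
      obtain ⟨h1, r, hr1, hr2, h2⟩ := aux_row n i hi2 c hc
      rw [aux_tabSum n i r hi2 hr1 hr2 a c h1 h2]
      have := hmin r (Finset.mem_Icc.2 ⟨hr1, hr2⟩)
      omega
  unfold MK
  rw [if_neg, hS, Finset.sum_insert (by simp), aux_Trest]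
  · ring
  · rintro (h | h)
    · exact Finset.insert_ne_empty _ _ h
    · have : i + 1 ∈ insert i (Finset.Icc (i + 2) (n + 1)) := by
        rw [h]; simp only [Finset.mem_Icc]; omega
      simp at this
end

section
/- For every Lusztig datum a ∈ ℬ and every 1 ≤ i ≤ n, one has −M_{[i+1,n+1]}(a) − M_{{i}∪[i+2,n+1]}(a) + M_{[i+2,n+1]}(a) + M_{[i,n+1]}(a) = ε_i^*(a); that is, the quantity ε_i^* computed from the collection M(a) as for an e-BZ datum agrees with ε_i^*(a). -/
/-- `A_l^{*(i)}(a) = Σ_{t=l+1}^{n+1} (a_{i,t} − a_{i+1,t+1})`. -/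
def Astar (n : ℕ) (a : ℤ → ℤ → ℤ) (i l : ℕ) : ℤ :=
  ∑ t ∈ Finset.Icc (l + 1) (n + 1), (a (i : ℤ) (t : ℤ) - a ((i : ℤ) + 1) ((t : ℤ) + 1))

/-- `ε_i^*(a) = max{A_i^{*(i)}(a),…,A_n^{*(i)}(a)}`. -/
def epsStar (n : ℕ) (a : ℤ → ℤ → ℤ) (i : ℕ) : ℤ :=
  ((Finset.Icc i n).image (Astar n a i)).max.unbotD 0

/-- `l_f(a,i)`: the minimal `l ∈ [i,n]` with `A_l^{*(i)}(a) = ε_i^*(a)`. -/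
def lfStar (n : ℕ) (a : ℤ → ℤ → ℤ) (i : ℕ) : ℕ :=
  (((Finset.Icc i n).filter fun l => Astar n a i l = epsStar n a i).min).untopD 0

/-- `l_e(a,i)`: the maximal `l ∈ [i,n]` with `A_l^{*(i)}(a) = ε_i^*(a)`. -/
def leStar (n : ℕ) (a : ℤ → ℤ → ℤ) (i : ℕ) : ℕ :=
  (((Finset.Icc i n).filter fun l => Astar n a i l = epsStar n a i).max).unbotD 0

/-- The operator `f̃_i^*`: increase `a_{i,l_f+1}` by 1 and decrease `a_{i+1,l_f+1}` by 1
(the latter discarded when `l_f = i`, the entry `(i+1,i+1)` being out of range). -/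
def ftilStar (n : ℕ) (a : ℤ → ℤ → ℤ) (i : ℕ) : ℤ → ℤ → ℤ := fun k l =>
  if k = (i : ℤ) ∧ l = (lfStar n a i : ℤ) + 1 then a k l + 1
  else if k = (i : ℤ) + 1 ∧ l = (lfStar n a i : ℤ) + 1 ∧ (i : ℤ) < (lfStar n a i : ℤ) then
    a k l - 1
  else a k l

/-- The operator `ẽ_i^*` (for `ε_i^*(a) > 0`): decrease `a_{i,l_e+1}` by 1 and increase
`a_{i+1,l_e+1}` by 1 (the latter discarded when `l_e = i`). -/
def etilStar (n : ℕ) (a : ℤ → ℤ → ℤ) (i : ℕ) : ℤ → ℤ → ℤ := fun k l =>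
  if k = (i : ℤ) ∧ l = (leStar n a i : ℤ) + 1 then a k l - 1
  else if k = (i : ℤ) + 1 ∧ l = (leStar n a i : ℤ) + 1 ∧ (i : ℤ) < (leStar n a i : ℤ) then
    a k l + 1
  else a k l

theorem kth_eq (K : Finset ℕ) (f : ℕ → ℕ) (L : ℕ) (hf : StrictMono f)
    (hK : K = (Finset.Icc 1 L).image f) :
    K.card = L ∧ ∀ p, 1 ≤ p → p ≤ L → kth K p = f p := by
  have hc : K.card = L := by
    rw [hK, Finset.card_image_of_injective _ hf.injective]; simp
  refine ⟨hc, fun p hp hpL => ?_⟩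
  have hs : K.sort (· ≤ ·) = (List.range L).map (fun j => f (j + 1)) := by
    have hsm : ((List.range L).map (fun j => f (j + 1))).Pairwise (· < ·) := by
      rw [List.pairwise_map]
      exact List.pairwise_lt_range.imp (fun h => hf (by omega))
    have h2 : K = ((List.range L).map (fun j => f (j + 1))).toFinset := by
      rw [hK]; ext x
      simp only [Finset.mem_image, Finset.mem_Icc, List.mem_toFinset, List.mem_map,
        List.mem_range]
      constructor
      · rintro ⟨y, hy, rfl⟩
        exact ⟨y - 1, by omega, by congr 1; omega⟩
      · rintro ⟨y, hy, rfl⟩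
        exact ⟨y + 1, by omega, rfl⟩
    rw [h2]
    exact (List.toFinset_sort (· ≤ ·) (hsm.imp (fun h => ne_of_lt h))).2
      (hsm.imp (fun h => le_of_lt h))
  unfold kth
  rw [hs, List.getD_eq_getElem _ _ (by simp; omega)]
  simp only [List.getElem_map, List.getElem_range]
  congr 1; omega

theorem tab_rigid (c : ℕ → ℕ → ℤ) (u L : ℕ) (d : ℤ)
    (h1 : ∀ p : ℕ, u ≤ p → p ≤ L → c p p = d + p)
    (h2 : ∀ p q : ℕ, u ≤ p → p ≤ q → q + 1 ≤ L → c p q ≤ c p (q + 1))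
    (h3 : ∀ p q : ℕ, u ≤ p → p + 1 ≤ q → q ≤ L → c p q < c (p + 1) q) :
    ∀ k p : ℕ, u ≤ p → p + k ≤ L → c p (p + k) = d + p := by
  have lo : ∀ k p : ℕ, u ≤ p → p + k ≤ L → d + p ≤ c p (p + k) := by
    intro k
    induction k with
    | zero => intro p hp hL; exact (h1 p hp (by omega)).ge
    | succ k ih =>
      intro p hp hL
      exact (ih p hp (by omega)).trans (h2 p (p + k) hp (by omega) (by omega))
  have hi : ∀ k p : ℕ, u ≤ p → p + k ≤ L → c p (p + k) ≤ d + p := by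
    intro k
    induction k with
    | zero => intro p hp hL; exact (h1 p hp (by omega)).le
    | succ k ih =>
      intro p hp hL
      have e1 := ih (p + 1) (by omega) (by omega)
      have e2 := h3 p (p + (k + 1)) hp (by omega) (by omega)
      rw [show p + 1 + k = p + (k + 1) by ring] at e1
      push_cast at e1
      omega
  exact fun k p hp hL => le_antisymm (hi k p hp hL) (lo k p hp hL)

/-- sum over the triangle -/
def Tsum (n : ℕ) (a : ℤ → ℤ → ℤ) (m : ℕ) : ℤ :=
  ∑ k ∈ Finset.Icc m (n + 1), ∑ t ∈ Finset.Icc (k + 1) (n + 1), a k t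

/-- column sums -/
def Wsum (n : ℕ) (a : ℤ → ℤ → ℤ) (m : ℕ) : ℤ :=
  ∑ k ∈ Finset.Icc m (n + 1), ∑ s ∈ Finset.Icc 1 (k - 1), a (s : ℤ) (k : ℤ)

theorem sum_shift (g : ℕ → ℤ) (u L d : ℕ) :
    ∑ q ∈ Finset.Icc u L, g (q + d) = ∑ t ∈ Finset.Icc (u + d) (L + d), g t := by
  refine Finset.sum_nbij' (fun q => q + d) (fun t => t - d) ?_ ?_ ?_ ?_ ?_ <;>
    simp only [Finset.mem_Icc] <;> intros <;> (try dsimp only) <;> omega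

theorem Tsum_shift (n : ℕ) (a : ℤ → ℤ → ℤ) (u L d : ℕ) (h : L + d = n + 1) :
    ∑ p ∈ Finset.Icc u L, ∑ q ∈ Finset.Icc (p + 1) L, a (d + p) (d + q) = Tsum n a (u + d) := by
  unfold Tsum
  rw [← h, ← sum_shift]
  refine Finset.sum_congr rfl fun p _ => ?_
  rw [show p + d + 1 = (p + 1) + d by ring, ← sum_shift]
  refine Finset.sum_congr rfl fun q _ => ?_
  push_cast
  rw [add_comm (d : ℤ), add_comm (d : ℤ)]

theorem W_eq_T (n : ℕ) (a : ℤ → ℤ → ℤ) : Wsum n a 1 = Tsum n a 1 := by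
  unfold Wsum Tsum
  apply Finset.sum_comm'
  intro x y
  simp only [Finset.mem_Icc]
  omega

theorem MK_Icc (n : ℕ) (a : ℤ → ℤ → ℤ) (m : ℕ) (hm : 1 ≤ m) (hm2 : m ≤ n + 2) :
    MK n a (Finset.Icc m (n + 1)) = - Wsum n a m + Tsum n a m := by
  unfold MK
  split_ifs with h
  · rcases h with h | h
    · simp [Wsum, Tsum, h]
    · have : m = 1 ∨ m = n + 2 := by
        have := congrArg Finset.card h
        simp at this
        omega
      rcases this with rfl | rfl
      · rw [W_eq_T]; ring
      · simp [Wsum, Tsum]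
  · obtain ⟨d, rfl⟩ : ∃ d, m = 1 + d := ⟨m - 1, by omega⟩
    obtain ⟨L, hL⟩ : ∃ L, L + d = n + 1 := ⟨n + 1 - d, by omega⟩
    obtain ⟨hc, hk⟩ := kth_eq (Finset.Icc (1 + d) (n + 1)) (fun p => d + p) L
      (fun x y h => by simpa using h) (by
        ext x
        simp only [Finset.mem_Icc, Finset.mem_image]
        constructor
        · intro hx; exact ⟨x - d, by omega, by omega⟩
        · rintro ⟨y, hy, rfl⟩; omega)
    have hset : {z : ℤ | ∃ c : ℕ → ℕ → ℤ, IsKTab (Finset.Icc (1 + d) (n + 1)) c ∧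
        z = tabSum a (Finset.Icc (1 + d) (n + 1)) c} = {Tsum n a (1 + d)} := by
      ext z
      simp only [Set.mem_ofPred_eq, Set.mem_singleton_iff]
      have key : ∀ c : ℕ → ℕ → ℤ, (∀ p q : ℕ, 1 ≤ p → p ≤ q → q ≤ L → c p q = d + p) →
          tabSum a (Finset.Icc (1 + d) (n + 1)) c = Tsum n a (1 + d) := by
        intro c hcc
        rw [← Tsum_shift n a 1 L d hL]
        unfold tabSum
        rw [hc]
        refine Finset.sum_congr rfl fun p hp => Finset.sum_congr rfl fun q hq => ?_
        simp only [Finset.mem_Icc] at hp hq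
        rw [hcc p q (by omega) (by omega) (by omega)]
        congr 1; ring
      constructor
      · rintro ⟨c, ⟨c1, c2, c3⟩, rfl⟩
        rw [hc] at c1 c2 c3
        apply key
        intro p q hp hpq hq
        obtain ⟨k, rfl⟩ := Nat.exists_eq_add_of_le hpq
        refine tab_rigid c 1 L d (fun p h h' => ?_) c2 c3 k p hp hq
        rw [c1 p h h', hk p h h']; push_cast; rfl
      · rintro rfl
        refine ⟨fun p q => d + p, ⟨fun p h h' => ?_, fun p q _ _ _ => le_rfl,
          fun p q _ _ _ => by push_cast; omega⟩, (key _ fun p q _ _ _ => rfl).symm⟩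
        rw [hc] at h'
        rw [hk p h h']; push_cast; rfl
    rw [hset, csInf_singleton]
    rfl

theorem W_step (n : ℕ) (a : ℤ → ℤ → ℤ) (m : ℕ) (hm : m ≤ n + 1) :
    Wsum n a m = ∑ s ∈ Finset.Icc 1 (m - 1), a (s : ℤ) (m : ℤ) + Wsum n a (m + 1) := by
  unfold Wsum
  rw [← Finset.insert_Icc_add_one_left_eq_Icc hm, Finset.sum_insert (by simp)]

theorem T_step (n : ℕ) (a : ℤ → ℤ → ℤ) (m : ℕ) (hm : m ≤ n + 1) :
    Tsum n a m = ∑ t ∈ Finset.Icc (m + 1) (n + 1), a (m : ℤ) (t : ℤ) + Tsum n a (m + 1) := by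
  unfold Tsum
  rw [← Finset.insert_Icc_add_one_left_eq_Icc hm, Finset.sum_insert (by simp)]

theorem first_row (n : ℕ) (a : ℤ → ℤ → ℤ) (ha : IsLusztig n a) (i s L r : ℕ)
    (his : i ≤ s) (hsn : s ≤ n) (hL : L + i = n + 1) (hr : r + i = s + 1) :
    ∑ q ∈ Finset.Icc 2 L, (if q ≤ r then a i (i + (q - 1)) else a (i + 1) (i + 1 + (q - 1))) =
      ∑ t ∈ Finset.Icc (i + 1) (n + 1), a (i : ℤ) (t : ℤ) - Astar n a i s := by
  have hA : Astar n a i s = ∑ t ∈ Finset.Icc (i + 1) (n + 1),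
      if t ≤ s then 0 else (a (i : ℤ) (t : ℤ) - a ((i : ℤ) + 1) ((t : ℤ) + 1)) := by
    unfold Astar
    rw [← Finset.sum_subset (s₁ := Finset.Icc (s + 1) (n + 1)) (s₂ := Finset.Icc (i + 1) (n + 1))]
    · refine Finset.sum_congr rfl fun t ht => ?_
      simp only [Finset.mem_Icc] at ht
      rw [if_neg (by omega)]
    · intro t; simp only [Finset.mem_Icc]; omega
    · intro t h1 h2
      simp only [Finset.mem_Icc] at h1 h2
      rw [if_pos (by omega)]
  rw [hA, ← Finset.sum_sub_distrib, Finset.sum_Icc_succ_top (by omega), if_neg (by omega)]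
  have hz : a ((i : ℤ) + 1) (((n + 1 : ℕ) : ℤ) + 1) = 0 := ha.2 _ _ (by push_cast; omega)
  rw [hz, sub_zero, sub_self, add_zero]
  refine Finset.sum_nbij' (fun q => q + i - 1) (fun t => t + 1 - i) ?_ ?_ ?_ ?_ ?_ <;>
    simp only [Finset.mem_Icc] <;> try omega
  intro q hq
  rw [Nat.cast_sub (by omega)]
  push_cast
  by_cases h : q ≤ r
  · rw [if_pos h, if_pos (by omega), sub_zero]
    congr 1; ring
  · rw [if_neg h, if_neg (by omega), sub_sub_cancel]
    congr 1; ring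

theorem eps_greatest (n : ℕ) (a : ℤ → ℤ → ℤ) (i : ℕ) (hi : i ≤ n) :
    (∃ s, i ≤ s ∧ s ≤ n ∧ epsStar n a i = Astar n a i s) ∧
    ∀ s, i ≤ s → s ≤ n → Astar n a i s ≤ epsStar n a i := by
  have hne : ((Finset.Icc i n).image (Astar n a i)).Nonempty := by simpa using hi
  have he : epsStar n a i = ((Finset.Icc i n).image (Astar n a i)).max' hne := by
    unfold epsStar
    rw [← Finset.coe_max' hne]; rfl
  rw [he]
  constructor
  · have := Finset.max'_mem _ hne
    simp only [Finset.mem_image, Finset.mem_Icc] at this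
    obtain ⟨s, hs, h⟩ := this
    exact ⟨s, hs.1, hs.2, h.symm⟩
  · intro s h1 h2
    exact Finset.le_max' _ _ (Finset.mem_image_of_mem _ (by simp [h1, h2]))

theorem MK_two (n : ℕ) (a : ℤ → ℤ → ℤ) (ha : IsLusztig n a) (i : ℕ) (hi1 : 1 ≤ i) (hi2 : i ≤ n) :
    MK n a (insert i (Finset.Icc (i + 2) (n + 1))) =
      -(∑ s ∈ Finset.Icc 1 (i - 1), a (s : ℤ) (i : ℤ) + Wsum n a (i + 2)) +
      (Tsum n a (i + 2) + (∑ t ∈ Finset.Icc (i + 1) (n + 1), a (i : ℤ) (t : ℤ)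
        - epsStar n a i)) := by
  unfold MK
  have hne : ¬ (insert i (Finset.Icc (i + 2) (n + 1)) = ∅ ∨
      insert i (Finset.Icc (i + 2) (n + 1)) = Finset.Icc 1 (n + 1)) := by
    rintro (h | h)
    · simp at h
    · have : i + 1 ∈ Finset.Icc 1 (n + 1) := by simp [hi2]
      rw [← h] at this
      simp at this
  rw [if_neg hne, Finset.sum_insert (by simp)]
  obtain ⟨L, hL⟩ : ∃ L, L + i = n + 1 := ⟨n + 1 - i, by omega⟩
  obtain ⟨hc, hk⟩ := kth_eq (insert i (Finset.Icc (i + 2) (n + 1)))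
    (fun p => if p ≤ 1 then i + p - 1 else i + p) L
    (fun x y h => by dsimp only; split_ifs <;> omega) (by
      ext x
      simp only [Finset.mem_Icc, Finset.mem_image, Finset.mem_insert]
      constructor
      · rintro (rfl | hx)
        · exact ⟨1, by omega, by simp⟩
        · exact ⟨x - i, by omega, by rw [if_neg (by omega)]; omega⟩
      · rintro ⟨y, hy, rfl⟩; split_ifs <;> omega)
  have hk1 : kth (insert i (Finset.Icc (i + 2) (n + 1))) 1 = i := by
    rw [hk 1 le_rfl (by omega)]; simp
  have hk2 : ∀ p, 2 ≤ p → p ≤ L → kth (insert i (Finset.Icc (i + 2) (n + 1))) p = i + p := by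
    intro p h h'
    rw [hk p (by omega) h', if_neg (by omega)]
  generalize insert i (Finset.Icc (i + 2) (n + 1)) = K at *
  have key : ∀ (c : ℕ → ℕ → ℤ) (r s : ℕ), i ≤ s → s ≤ n → r + i = s + 1 →
      (∀ p q : ℕ, 2 ≤ p → p ≤ q → q ≤ L → c p q = i + p) →
      (∀ q : ℕ, 2 ≤ q → q ≤ L → c 1 q = if q ≤ r then (i : ℤ) else i + 1) →
      tabSum a K c = Tsum n a (i + 2) + (∑ t ∈ Finset.Icc (i + 1) (n + 1), a (i : ℤ) (t : ℤ)
        - Astar n a i s) := by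
    intro c r s h1 h2 h3 hp h1q
    rw [← first_row n a ha i s L r h1 h2 hL h3, add_comm i 2, ← Tsum_shift n a 2 L i hL]
    unfold tabSum
    rw [hc, ← Finset.insert_Icc_add_one_left_eq_Icc (show 1 ≤ L by omega),
      Finset.sum_insert (by simp), add_comm]
    congr 1
    · refine Finset.sum_congr rfl fun p hp' => Finset.sum_congr rfl fun q hq => ?_
      simp only [Finset.mem_Icc] at hp' hq
      rw [hp p q (by omega) (by omega) (by omega)]
      congr 1; ring
    · refine Finset.sum_congr rfl fun q hq => ?_
      simp only [Finset.mem_Icc] at hq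
      rw [h1q q (by omega) (by omega)]
      split_ifs <;> simp
  obtain ⟨⟨s0, hs1, hs2, hs3⟩, hmax⟩ := eps_greatest n a i hi2
  have hleast : IsLeast {z : ℤ | ∃ c : ℕ → ℕ → ℤ, IsKTab K c ∧ z = tabSum a K c}
      (Tsum n a (i + 2) + (∑ t ∈ Finset.Icc (i + 1) (n + 1), a (i : ℤ) (t : ℤ)
        - epsStar n a i)) := by
    constructor
    · refine ⟨fun p q => if p = 1 then (if q ≤ s0 + 1 - i then (i : ℤ) else i + 1) else i + p,
        ⟨?_, ?_, ?_⟩, ?_⟩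
      · intro p h h'
        rw [hc] at h'
        by_cases hp : p = 1
        · subst hp
          rw [hk1]; dsimp only; rw [if_pos rfl, if_pos (by omega)]
        · rw [hk2 p (by omega) h']; dsimp only; rw [if_neg hp]; push_cast; rfl
      · intro p q _ _ _
        dsimp only
        split_ifs <;> omega
      · intro p q _ _ _
        dsimp only
        split_ifs <;> omega
      · rw [hs3]
        refine (key _ (s0 + 1 - i) s0 hs1 hs2 (by omega) ?_ ?_).symm
        · intro p q h _ _
          rw [if_neg (by omega)]
        · intro q _ _
          simp
    · rintro z ⟨c, ⟨c1, c2, c3⟩, rfl⟩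
      rw [hc] at c1 c2 c3
      have hp2 : ∀ p q : ℕ, 2 ≤ p → p ≤ q → q ≤ L → c p q = i + p := by
        intro p q hp hpq hq
        obtain ⟨k, rfl⟩ := Nat.exists_eq_add_of_le hpq
        refine tab_rigid c 2 L i (fun p h h' => ?_) (fun p q h => c2 p q (by omega))
          (fun p q h => c3 p q (by omega)) k p hp hq
        rw [c1 p (by omega) h', hk2 p h h']; push_cast; rfl
      have h11 : c 1 1 = i := by rw [c1 1 le_rfl (by omega), hk1]
      have hmono : ∀ q k : ℕ, 1 ≤ q → q + k ≤ L → c 1 q ≤ c 1 (q + k) := by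
        intro q k hq
        induction k with
        | zero => intro _; exact le_rfl
        | succ k ih => intro h; exact (ih (by omega)).trans (c2 1 (q + k) le_rfl (by omega) (by omega))
      have hlo : ∀ q, 1 ≤ q → q ≤ L → (i : ℤ) ≤ c 1 q := by
        intro q h h'
        have := hmono 1 (q - 1) le_rfl (by omega)
        rwa [h11, show 1 + (q - 1) = q by omega] at this
      have hhi : ∀ q, 2 ≤ q → q ≤ L → c 1 q ≤ i + 1 := by
        intro q h h'
        have e1 := c3 1 q le_rfl h h'
        have e2 := hp2 2 q le_rfl h h'
        push_cast at e2
        rw [show 1 + 1 = 2 from rfl, e2] at e1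
        omega
      classical
      have hr1 : 1 ≤ Nat.findGreatest (fun q => c 1 q = i) L :=
        Nat.le_findGreatest (by omega) h11
      have hrL : Nat.findGreatest (fun q => c 1 q = i) L ≤ L := Nat.findGreatest_le L
      have hrs : c 1 (Nat.findGreatest (fun q => c 1 q = i) L) = i :=
        Nat.findGreatest_spec (P := fun q => c 1 q = i) (m := 1) (by omega) h11
      have hrg : ∀ q, Nat.findGreatest (fun q => c 1 q = i) L < q → q ≤ L → c 1 q ≠ i :=
        fun q h h' => Nat.findGreatest_is_greatest h h'
      generalize Nat.findGreatest (fun q => c 1 q = i) L = r at *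
      rw [key c r (r + i - 1) (by omega) (by omega) (by omega) hp2 ?_]
      · have := hmax (r + i - 1) (by omega) (by omega)
        linarith
      · intro q h h'
        have e1 := hlo q (by omega) h'
        split_ifs with hq
        · have e2 := hmono q (r - q) (by omega) (by omega)
          rw [show q + (r - q) = r by omega, hrs] at e2
          omega
        · have e2 := hhi q h h'
          have e3 := hrg q (by omega) h'
          omega
  rw [hleast.csInf_eq]
  rfl


/-- for every Lusztig datum `a` and `1 ≤ i ≤ n`,
`−M_{[i+1,n+1]}(a) − M_{{i}∪[i+2,n+1]}(a) + M_{[i+2,n+1]}(a) + M_{[i,n+1]}(a) = ε_i^*(a)`;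
i.e. the quantity `ε_i^*` computed from the collection `M(a)` as for an `e`-BZ datum agrees
with `ε_i^*(a)`. -/
theorem stmt13 (n : ℕ) (hn : 1 ≤ n) (a : ℤ → ℤ → ℤ) (ha : IsLusztig n a)
    (i : ℕ) (hi1 : 1 ≤ i) (hi2 : i ≤ n) :
    -MK n a (Finset.Icc (i + 1) (n + 1)) - MK n a (insert i (Finset.Icc (i + 2) (n + 1))) +
        MK n a (Finset.Icc (i + 2) (n + 1)) + MK n a (Finset.Icc i (n + 1)) =
      epsStar n a i := by
  rw [MK_Icc n a (i + 1) (by omega) (by omega), MK_Icc n a (i + 2) (by omega) (by omega),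
    MK_Icc n a i hi1 (by omega), MK_two n a ha i hi1 hi2, W_step n a i (by omega),
    T_step n a i (by omega)]
  ring
end
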